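/- Fix c with 1/2 ≤ c < 1. For every ε > 0 there exists x₀ such that for all x ≥ x₀: T'_c(x) ≤ (1 + ε)·16·𝔖·Σ_{h < x^{1−c}, h even} ∏_{p | h, p > 2}(1 + 1/(p − 2)) · (x/h)/(log(x/h))². -/

import Mathlib

open Real Finset

attribute [local instance] Classical.propDecidable

/-- `Pplus n` is the largest prime factor of `n`, with the convention `Pplus 1 = 1`. -/
noncomputable def Pplus (n : ℕ) : ℕ := if n = 1 then 1 else n.primeFactors.sup id

/-- `T' c x = #{p ≤ x : p prime, P⁺(p-1) ≥ x^c}`. -/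
noncomputable def T' (c x : ℝ) : ℕ :=
  ((Finset.range (⌊x⌋₊ + 1)).filter
    (fun p : ℕ => p.Prime ∧ x ^ c ≤ (Pplus (p - 1) : ℝ))).card

/-- The twin-prime constant `𝔖 = ∏_{p > 2 prime} (1 − 1/(p−1)²)`. -/
noncomputable def twinConst : ℝ :=
  ∏' p : Nat.Primes, if 2 < (p : ℕ) then 1 - 1 / ((p : ℕ) - 1 : ℝ) ^ 2 else 1

/-!
A prime `p ≤ x` with `q = P⁺(p - 1) ≥ x ^ c` is `p = h q + 1` with `h < x ^ (1 - c)` even, and for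
each `h` the number of `q ≤ y = x / h` with `q` and `h q + 1` both prime is bounded by Selberg's
sieve of the polynomial `n (h n + 1)` with weights supported on `d ≤ z = y ^ a`, where `a < 1 / 2`
is close to `1 / 2`: it is at most `y / G(z)` up to a remainder `o(y / log² y)`, uniformly in `h`,
because `y = x / h ≥ x ^ c`.

The denominator `G(z)` is bounded from below by comparison with `∑ τ(n) / n ≥ log² z / 2` over
`n ≤ z`, whose local factor `(1 - 1/p)⁻²` is that of `G` times `1 - 1/(p - 1)²`, times
`1 + 1/(p - 2)` if `p ∣ h`, for odd `p`, and twice that of `G` for `p = 2`. For odd primes the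
factor `1 - 1/(p - 1)²` may be replaced by `1`, but doing so only outside a large finite set of
primes loses an arbitrarily small amount against `𝔖`. On that finite set, with product `w`, the
factors are kept exactly, at the cost of replacing `z` by `z / w`. Together with `z = y ^ a` this
gives the constant `4 · 4 = 16`.
-/

section

open ArithmeticFunction
open scoped ArithmeticFunction.Moebius ArithmeticFunction.zeta

/-- The part `∑_{d ∣ P, d ≤ z} f d` of a divisor sum; for Selberg's terms `f = g` this is the
denominator of the main term of the sieve. -/
noncomputable def truncatedDivisorSum (f : ArithmeticFunction ℝ) (P : ℕ) (z : ℝ) : ℝ :=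
  ∑ d ∈ P.divisors.filter fun d : ℕ => (d : ℝ) ≤ z, f d

section TruncatedDivisorSum

variable {f : ArithmeticFunction ℝ} {P : ℕ} {z : ℝ}

lemma truncatedDivisorSum_nonneg (hf : ∀ d ∈ P.divisors, 0 ≤ f d) :
    0 ≤ truncatedDivisorSum f P z :=
  sum_nonneg fun d hd => hf d (mem_of_mem_filter d hd)

lemma truncatedDivisorSum_mono (hf : ∀ d ∈ P.divisors, 0 ≤ f d) :
    Monotone (truncatedDivisorSum f P) := fun _ _ hz =>
  sum_le_sum_of_subset_of_nonneg (monotone_filter_right _ fun _ _ h => h.trans hz)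
    fun d hd _ => hf d (mem_of_mem_filter d hd)

lemma one_le_truncatedDivisorSum (hf1 : f 1 = 1) (hf : ∀ d ∈ P.divisors, 0 ≤ f d) (hP : P ≠ 0)
    (hz : 1 ≤ z) : 1 ≤ truncatedDivisorSum f P z :=
  hf1.ge.trans <| single_le_sum (f := f) (fun d hd => hf d (mem_of_mem_filter d hd)) <|
    mem_filter.2 ⟨Nat.one_mem_divisors.2 hP, by simpa using hz⟩

lemma truncatedDivisorSum_mul_of_coprime (hf : f.IsMultiplicative) {a b : ℕ}
    (hab : a.Coprime b) :
    truncatedDivisorSum f (a * b) z = ∑ d ∈ a.divisors, f d * truncatedDivisorSum f b (z / d) := by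
  have hdiv : (a * b).divisors = (a.divisors ×ˢ b.divisors).image fun x => x.1 * x.2 := by
    rw [Nat.divisors_mul, mul_def]
  simp only [truncatedDivisorSum, sum_filter, mul_sum, mul_ite, mul_zero]
  rw [hdiv, sum_image hab.mul_injOn_divisors, sum_product]
  refine sum_congr rfl fun d hd => sum_congr rfl fun e he => ?_
  have hd0 : (0 : ℝ) < d := by exact_mod_cast Nat.pos_of_mem_divisors hd
  have hde : d.Coprime e := hab.of_dvd (Nat.dvd_of_mem_divisors hd) (Nat.dvd_of_mem_divisors he)
  simp only [hf.map_mul_of_coprime hde, le_div_iff₀' hd0, Nat.cast_mul]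

lemma truncatedDivisorSum_prime_mul (hf : f.IsMultiplicative) {p b : ℕ} (hp : p.Prime)
    (hpb : p.Coprime b) :
    truncatedDivisorSum f (p * b) z =
      truncatedDivisorSum f b z + f p * truncatedDivisorSum f b (z / p) := by
  simp [truncatedDivisorSum_mul_of_coprime hf hpb, hp.divisors, hp.ne_one.symm, hf.map_one]

lemma truncatedDivisorSum_mul_le (hf : f.IsMultiplicative) {a b : ℕ} (hab : a.Coprime b)
    (hfa : ∀ d ∈ a.divisors, 0 ≤ f d) (hfb : ∀ d ∈ b.divisors, 0 ≤ f d) (hz : 0 ≤ z) :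
    truncatedDivisorSum f (a * b) z ≤ (∑ d ∈ a.divisors, f d) * truncatedDivisorSum f b z := by
  rw [truncatedDivisorSum_mul_of_coprime hf hab, sum_mul]
  refine sum_le_sum fun d hd => mul_le_mul_of_nonneg_left ?_ (hfa d hd)
  refine truncatedDivisorSum_mono hfb (div_le_self hz ?_)
  exact_mod_cast Nat.pos_of_mem_divisors hd

lemma le_truncatedDivisorSum_mul (hf : f.IsMultiplicative) {a b : ℕ} (hab : a.Coprime b)
    (hfa : ∀ d ∈ a.divisors, 0 ≤ f d) (hfb : ∀ d ∈ b.divisors, 0 ≤ f d) (hz : 0 ≤ z) :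
    (∑ d ∈ a.divisors, f d) * truncatedDivisorSum f b (z / a) ≤
      truncatedDivisorSum f (a * b) z := by
  rw [truncatedDivisorSum_mul_of_coprime hf hab, sum_mul]
  refine sum_le_sum fun d hd => mul_le_mul_of_nonneg_left ?_ (hfa d hd)
  have hd0 : (0 : ℝ) < d := by exact_mod_cast Nat.pos_of_mem_divisors hd
  refine truncatedDivisorSum_mono hfb (div_le_div_of_nonneg_left hz hd0 ?_)
  exact_mod_cast Nat.divisor_le hd

lemma truncatedDivisorSum_le_prod_mul {f' : ArithmeticFunction ℝ} (hf : f.IsMultiplicative)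
    (hf' : f'.IsMultiplicative) (hf0 : ∀ d ∈ P.divisors, 0 ≤ f d)
    (hf'0 : ∀ d ∈ P.divisors, 0 ≤ f' d) (hP : Squarefree P) {c : ℕ → ℝ} (hc : ∀ p, 0 ≤ c p)
    (hle : ∀ p ∈ P.primeFactors, 1 + f p ≤ (1 + c p) * (1 + f' p)) (hz : 0 ≤ z) :
    truncatedDivisorSum f P z ≤
      (∏ p ∈ P.primeFactors, (1 + c p)) * truncatedDivisorSum f' P z := by
  induction P using induction_on_primes generalizing z with
  | zero => simp at hP
  | one => simp [truncatedDivisorSum, sum_filter, hf.map_one, hf'.map_one]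
  | prime_mul p b hp ih =>
    obtain ⟨hpb, -, hb⟩ := Nat.squarefree_mul_iff.1 hP
    have hb0 : b ≠ 0 := hb.ne_zero
    have hsub : b.divisors ⊆ (p * b).divisors :=
      Nat.divisors_subset_of_dvd hP.ne_zero (dvd_mul_left b p)
    have hsub' : b.primeFactors ⊆ (p * b).primeFactors :=
      Nat.primeFactors_mono (dvd_mul_left b p) hP.ne_zero
    have hpmem : p ∈ (p * b).primeFactors :=
      Nat.mem_primeFactors.2 ⟨hp, dvd_mul_right p b, hP.ne_zero⟩
    have ih' : ∀ {y : ℝ}, 0 ≤ y → _ :=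
      ih (fun d hd => hf0 d (hsub hd)) (fun d hd => hf'0 d (hsub hd)) hb
        fun q hq => hle q (hsub' hq)
    set C := ∏ q ∈ b.primeFactors, (1 + c q)
    set G := truncatedDivisorSum f' b
    have hC : 0 ≤ C := prod_nonneg fun q _ => by linarith [hc q]
    have hp1 : (1 : ℝ) ≤ p := by exact_mod_cast hp.one_lt.le
    have hzp : z / p ≤ z := div_le_self hz hp1
    have hzp0 : 0 ≤ z / p := by positivity
    have hG0 : 0 ≤ G (z / p) := truncatedDivisorSum_nonneg fun d hd => hf'0 d (hsub hd)
    have hG : G (z / p) ≤ G z := truncatedDivisorSum_mono (fun d hd => hf'0 d (hsub hd)) hzp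
    have hfp : 0 ≤ f p := hf0 p (by simp [hb0, hp.ne_zero])
    rw [truncatedDivisorSum_prime_mul hf hp hpb, truncatedDivisorSum_prime_mul hf' hp hpb,
      hpb.primeFactors_mul, prod_union hpb.disjoint_primeFactors, hp.primeFactors, prod_singleton]
    calc truncatedDivisorSum f b z + f p * truncatedDivisorSum f b (z / p)
        ≤ C * G z + f p * (C * G (z / p)) := by gcongr <;> exact ih' ‹_›
      _ = C * (G z + f p * G (z / p)) := by ring
      _ ≤ C * ((1 + c p) * (G z + f' p * G (z / p))) := by
        gcongr
        nlinarith [hle p hpmem, hc p, mul_le_mul_of_nonneg_right (hle p hpmem) hG0,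
          mul_le_mul_of_nonneg_left hG (hc p)]
      _ = _ := by ring

lemma truncatedDivisorSum_div_mul_le {f' : ArithmeticFunction ℝ} {w b : ℕ} (hf : f.IsMultiplicative)
    (hf' : f'.IsMultiplicative) (hwb : Squarefree (w * b)) (hf0 : ∀ d ∈ (w * b).divisors, 0 ≤ f d)
    (hf'0 : ∀ d ∈ (w * b).divisors, 0 ≤ f' d) {c : ℕ → ℝ} (hc : ∀ p, 0 ≤ c p)
    (hle : ∀ p ∈ b.primeFactors, 1 + f p ≤ (1 + c p) * (1 + f' p)) (hz : 0 ≤ z) :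
    truncatedDivisorSum f (w * b) (z / w) * ∑ d ∈ w.divisors, f' d ≤
      (∑ d ∈ w.divisors, f d) * (∏ p ∈ b.primeFactors, (1 + c p)) *
        truncatedDivisorSum f' (w * b) z := by
  obtain ⟨hcop, -, hb⟩ := Nat.squarefree_mul_iff.1 hwb
  have hw : w.divisors ⊆ (w * b).divisors :=
    Nat.divisors_subset_of_dvd hwb.ne_zero (dvd_mul_right w b)
  have hb' : b.divisors ⊆ (w * b).divisors :=
    Nat.divisors_subset_of_dvd hwb.ne_zero (dvd_mul_left b w)
  have hz' : 0 ≤ z / w := by positivity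
  have hF : 0 ≤ ∑ d ∈ w.divisors, f d := sum_nonneg fun d hd => hf0 d (hw hd)
  have hF' : 0 ≤ ∑ d ∈ w.divisors, f' d := sum_nonneg fun d hd => hf'0 d (hw hd)
  have hC : 0 ≤ ∏ p ∈ b.primeFactors, (1 + c p) := prod_nonneg fun p _ => by linarith [hc p]
  calc truncatedDivisorSum f (w * b) (z / w) * ∑ d ∈ w.divisors, f' d
      ≤ ((∑ d ∈ w.divisors, f d) * truncatedDivisorSum f b (z / w)) * ∑ d ∈ w.divisors, f' d := by
        gcongr
        exact truncatedDivisorSum_mul_le hf hcop (fun d hd => hf0 d (hw hd))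
          (fun d hd => hf0 d (hb' hd)) hz'
    _ ≤ ((∑ d ∈ w.divisors, f d) *
          ((∏ p ∈ b.primeFactors, (1 + c p)) * truncatedDivisorSum f' b (z / w))) *
            ∑ d ∈ w.divisors, f' d := by
        gcongr
        exact truncatedDivisorSum_le_prod_mul hf hf' (fun d hd => hf0 d (hb' hd))
          (fun d hd => hf'0 d (hb' hd)) hb hc hle hz'
    _ = (∑ d ∈ w.divisors, f d) * (∏ p ∈ b.primeFactors, (1 + c p)) *
          ((∑ d ∈ w.divisors, f' d) * truncatedDivisorSum f' b (z / w)) := by ring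
    _ ≤ _ := by
        gcongr
        exact le_truncatedDivisorSum_mul hf' hcop (fun d hd => hf'0 d (hw hd))
          (fun d hd => hf'0 d (hb' hd)) hz

end TruncatedDivisorSum

section SelbergBound

open BoundingSieve

lemma sum_divisors_mul_filter_dvd {M : Type*} [AddCommMonoid M] {a : ℕ} (ha : a ≠ 0) (b : ℕ)
    (F : ℕ → M) : ∑ d ∈ (a * b).divisors with a ∣ d, F d = ∑ e ∈ b.divisors, F (a * e) := by
  have himage : (a * b).divisors.filter (a ∣ ·) = b.divisors.image (a * ·) := by
    ext d
    simp only [mem_filter, mem_image, Nat.mem_divisors]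
    constructor
    · rintro ⟨⟨hd, hne⟩, e, rfl⟩
      exact ⟨e, ⟨Nat.dvd_of_mul_dvd_mul_left (Nat.pos_of_ne_zero ha) hd, right_ne_zero_of_mul hne⟩,
        rfl⟩
    · rintro ⟨e, ⟨he, hne⟩, rfl⟩
      exact ⟨⟨mul_dvd_mul_left a he, mul_ne_zero ha hne⟩, dvd_mul_right a e⟩
  rw [himage, sum_image fun _ _ _ _ h => Nat.eq_of_mul_eq_mul_left (Nat.pos_of_ne_zero ha) h]

lemma sum_divisors_filter_dvd_moebius {m : ℕ} (hm : Squarefree m) (l : ℕ) :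
    ∑ d ∈ m.divisors with l ∣ d, (μ d : ℝ) = if l = m then (μ l : ℝ) else 0 := by
  by_cases hl : l ∣ m
  · obtain ⟨k, rfl⟩ := hl
    obtain ⟨hlk, -, -⟩ := Nat.squarefree_mul_iff.1 hm
    have hl0 : l ≠ 0 := left_ne_zero_of_mul hm.ne_zero
    have hsplit : ∀ e ∈ k.divisors, (μ (l * e) : ℝ) = μ l * μ e := fun e he => by
      rw [isMultiplicative_moebius.map_mul_of_coprime
        (hlk.coprime_dvd_right (Nat.dvd_of_mem_divisors he)), Int.cast_mul]
    have hsum : ∑ e ∈ k.divisors, (μ e : ℝ) = if k = 1 then 1 else 0 := by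
      have h := congrArg (· k) (coe_moebius_mul_coe_zeta (R := ℝ))
      rwa [coe_mul_zeta_apply, one_apply] at h
    rw [sum_divisors_mul_filter_dvd hl0, sum_congr rfl hsplit, ← mul_sum, hsum]
    simp [hl0]
  · rw [filter_false_of_mem fun d hd h => hl (h.trans (Nat.dvd_of_mem_divisors hd)), sum_empty,
      if_neg (by rintro rfl; exact hl dvd_rfl)]

lemma abs_lambdaSquared_le (w : ℕ → ℝ) {d P : ℕ} (hd : d ∈ P.divisors) :
    |lambdaSquared w d| ≤ ∑ d₁ ∈ P.divisors, ∑ d₂ ∈ P.divisors,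
      if d = d₁.lcm d₂ then |w d₁| * |w d₂| else 0 := by
  have hsub : d.divisors ⊆ P.divisors :=
    Nat.divisors_subset_of_dvd (Nat.mem_divisors.1 hd).2 (Nat.dvd_of_mem_divisors hd)
  have hnonneg : ∀ d₁ d₂ : ℕ, 0 ≤ if d = d₁.lcm d₂ then |w d₁| * |w d₂| else 0 :=
    fun d₁ d₂ => by positivity
  calc |lambdaSquared w d|
      ≤ ∑ d₁ ∈ d.divisors, ∑ d₂ ∈ d.divisors, |if d = d₁.lcm d₂ then w d₁ * w d₂ else 0| :=
        (abs_sum_le_sum_abs _ _).trans (sum_le_sum fun _ _ => abs_sum_le_sum_abs _ _)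
    _ = ∑ d₁ ∈ d.divisors, ∑ d₂ ∈ d.divisors, if d = d₁.lcm d₂ then |w d₁| * |w d₂| else 0 := by
        simp only [apply_ite abs, abs_mul, abs_zero]
    _ ≤ ∑ d₁ ∈ P.divisors, ∑ d₂ ∈ d.divisors, if d = d₁.lcm d₂ then |w d₁| * |w d₂| else 0 :=
        sum_le_sum_of_subset_of_nonneg hsub fun _ _ _ => sum_nonneg fun _ _ => hnonneg _ _
    _ ≤ _ := sum_le_sum fun _ _ => sum_le_sum_of_subset_of_nonneg hsub fun _ _ _ => hnonneg _ _

lemma errSum_lambdaSquared_le (s : BoundingSieve) (w : ℕ → ℝ) :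
    s.errSum (lambdaSquared w) ≤
      ∑ d₁ ∈ s.prodPrimes.divisors, ∑ d₂ ∈ s.prodPrimes.divisors,
        |w d₁| * |w d₂| * |s.rem (d₁.lcm d₂)| := by
  calc s.errSum (lambdaSquared w)
      ≤ ∑ d ∈ s.prodPrimes.divisors, (∑ d₁ ∈ s.prodPrimes.divisors, ∑ d₂ ∈ s.prodPrimes.divisors,
          if d = d₁.lcm d₂ then |w d₁| * |w d₂| else 0) * |s.rem d| :=
        sum_le_sum fun d hd => mul_le_mul_of_nonneg_right (abs_lambdaSquared_le w hd) (abs_nonneg _)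
    _ = ∑ d₁ ∈ s.prodPrimes.divisors, ∑ d₂ ∈ s.prodPrimes.divisors, ∑ d ∈ s.prodPrimes.divisors,
          if d = d₁.lcm d₂ then |w d₁| * |w d₂| * |s.rem d| else 0 := by
        simp only [sum_mul, ite_mul, zero_mul]
        rw [sum_comm]
        exact sum_congr rfl fun _ _ => sum_comm
    _ = _ := by
        refine sum_congr rfl fun d₁ h₁ => sum_congr rfl fun d₂ h₂ => ?_
        rw [sum_ite_eq', if_pos]
        rw [Nat.mem_divisors] at h₁ h₂ ⊢
        exact ⟨Nat.lcm_dvd h₁.1 h₂.1, h₁.2⟩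

variable {s : BoundingSieve} {z : ℝ}

/-- The denominator `G(z) = ∑_{l ∣ P, l ≤ z} g l` of Selberg's main term. -/
noncomputable def selbergDenominator (s : BoundingSieve) (z : ℝ) : ℝ :=
  truncatedDivisorSum s.selbergTerms s.prodPrimes z

/-- Selberg's optimal weights `λ_d = (μ d / (ν d G(z))) ∑_{l ∣ P, d ∣ l, l ≤ z} g l`; the inner
sum is written as `g d * ∑_{e ∣ P / d, e ≤ z / d} g e`. -/
noncomputable def selbergWeight (s : BoundingSieve) (z : ℝ) (d : ℕ) : ℝ :=
  μ d * (s.selbergTerms d * truncatedDivisorSum s.selbergTerms (s.prodPrimes / d) (z / d)) /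
    (s.nu d * selbergDenominator s z)

lemma selbergTerms_nonneg_of_mem_divisors {a : ℕ} (ha : a ∣ s.prodPrimes) :
    ∀ d ∈ a.divisors, 0 ≤ s.selbergTerms d := fun _ hd =>
  (selbergTerms_pos ((Nat.dvd_of_mem_divisors hd).trans ha)).le

lemma selbergDenominator_pos (hz : 1 ≤ z) : 0 < selbergDenominator s z :=
  one_pos.trans_le <| one_le_truncatedDivisorSum selbergTerms_isMultiplicative.map_one
    (selbergTerms_nonneg_of_mem_divisors dvd_rfl) prodPrimes_ne_zero hz

lemma selbergWeight_one (hz : 1 ≤ z) : selbergWeight s z 1 = 1 := by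
  have hG : truncatedDivisorSum s.selbergTerms s.prodPrimes z ≠ 0 :=
    (selbergDenominator_pos hz).ne'
  simp [selbergWeight, selbergDenominator, selbergTerms_isMultiplicative.map_one,
    s.nu_mult.map_one, hG]

lemma selbergWeight_eq_zero {d : ℕ} (hd : z < d) : selbergWeight s z d = 0 := by
  have hempty : truncatedDivisorSum s.selbergTerms (s.prodPrimes / d) (z / d) = 0 := by
    refine sum_eq_zero fun e he => absurd (mem_filter.1 he).2 (not_le.2 ?_)
    have he1 : (1 : ℝ) ≤ e := by exact_mod_cast Nat.pos_of_mem_divisors (mem_filter.1 he).1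
    rcases (Nat.cast_nonneg d : (0 : ℝ) ≤ d).eq_or_lt with h0 | h0
    · rw [← h0, div_zero]; linarith
    · exact ((div_lt_one h0).2 hd).trans_le he1
  simp [selbergWeight, hempty]

lemma abs_selbergWeight_le_one (hz : 1 ≤ z) {d : ℕ} (hd : d ∣ s.prodPrimes) :
    |selbergWeight s z d| ≤ 1 := by
  obtain ⟨e, he⟩ := hd
  have hdP : d ∣ s.prodPrimes := ⟨e, he⟩
  have hd0 : d ≠ 0 := ne_zero_of_dvd_ne_zero prodPrimes_ne_zero hdP
  have hde : d.Coprime e :=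
    (Nat.squarefree_mul_iff.1 (he ▸ s.prodPrimes_squarefree)).1
  have hν : 0 < s.nu d := nu_pos_of_dvd_prodPrimes hdP
  have hg : 0 < s.selbergTerms d := selbergTerms_pos hdP
  have hG : 0 < selbergDenominator s z := selbergDenominator_pos hz
  have hge := selbergTerms_nonneg_of_mem_divisors (s := s) ⟨d, he.trans (mul_comm d e)⟩
  have hμ : |(μ d : ℝ)| ≤ 1 := by exact_mod_cast abs_moebius_le_one
  have hsum : ∑ l ∈ d.divisors, s.selbergTerms l = s.selbergTerms d * (s.nu d)⁻¹ := by
    rw [← sum_divisors_selbergTerms_eq_selbergTerms_mul_nu_inv hdP, ← sum_filter,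
      Nat.divisors_filter_dvd_of_dvd prodPrimes_ne_zero hdP]
  have hlower : s.selbergTerms d * (s.nu d)⁻¹ *
      truncatedDivisorSum s.selbergTerms e (z / d) ≤ selbergDenominator s z := by
    rw [← hsum, selbergDenominator, he]
    exact le_truncatedDivisorSum_mul selbergTerms_isMultiplicative hde
      (selbergTerms_nonneg_of_mem_divisors hdP) hge (by linarith)
  have hGe : 0 ≤ truncatedDivisorSum s.selbergTerms e (z / d) := truncatedDivisorSum_nonneg hge
  rw [selbergWeight, he, Nat.mul_div_cancel_left e (Nat.pos_of_ne_zero hd0), abs_div, abs_mul,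
    abs_of_nonneg (mul_nonneg hg.le hGe), abs_of_pos (mul_pos hν hG), div_le_one (mul_pos hν hG)]
  calc |(μ d : ℝ)| * (s.selbergTerms d * truncatedDivisorSum s.selbergTerms e (z / d))
      ≤ s.selbergTerms d * truncatedDivisorSum s.selbergTerms e (z / d) :=
        mul_le_of_le_one_left (mul_nonneg hg.le hGe) hμ
    _ = s.nu d * (s.selbergTerms d * (s.nu d)⁻¹ *
          truncatedDivisorSum s.selbergTerms e (z / d)) := by field_simp
    _ ≤ s.nu d * selbergDenominator s z := mul_le_mul_of_nonneg_left hlower hν.le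

lemma nu_mul_selbergWeight {d : ℕ} (hd : d ∣ s.prodPrimes) :
    s.nu d * selbergWeight s z d = (selbergDenominator s z)⁻¹ *
      ∑ m ∈ s.prodPrimes.divisors with d ∣ m,
        μ d * if (m : ℝ) ≤ z then s.selbergTerms m else 0 := by
  have hν : s.nu d ≠ 0 := nu_ne_zero hd
  obtain ⟨e, he⟩ := hd
  obtain ⟨hde, -, -⟩ := Nat.squarefree_mul_iff.1 (he ▸ s.prodPrimes_squarefree)
  have hd0 : d ≠ 0 := left_ne_zero_of_mul (he ▸ s.prodPrimes_squarefree.ne_zero)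
  have hd0' : (0 : ℝ) < d := by exact_mod_cast Nat.pos_of_ne_zero hd0
  have hsum : ∑ m ∈ s.prodPrimes.divisors with d ∣ m,
      (if (m : ℝ) ≤ z then s.selbergTerms m else 0) =
        s.selbergTerms d * truncatedDivisorSum s.selbergTerms e (z / d) := by
    rw [he, sum_divisors_mul_filter_dvd hd0, truncatedDivisorSum, sum_filter, mul_sum]
    refine sum_congr rfl fun k hk => ?_
    simp only [selbergTerms_isMultiplicative.map_mul_of_coprime
      (hde.coprime_dvd_right (Nat.dvd_of_mem_divisors hk)), le_div_iff₀' hd0', Nat.cast_mul,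
      mul_ite, mul_zero]
  rw [← mul_sum, hsum, selbergWeight, he, Nat.mul_div_cancel_left e (Nat.pos_of_ne_zero hd0)]
  field_simp

lemma sum_nu_mul_selbergWeight (l : ℕ) :
    ∑ d ∈ s.prodPrimes.divisors with l ∣ d, s.nu d * selbergWeight s z d =
      if l ∈ s.prodPrimes.divisors.filter (fun l : ℕ => (l : ℝ) ≤ z)
        then μ l * s.selbergTerms l / selbergDenominator s z else 0 := by
  set P := s.prodPrimes
  have hP : P ≠ 0 := prodPrimes_ne_zero
  calc ∑ d ∈ P.divisors with l ∣ d, s.nu d * selbergWeight s z d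
      = ∑ d ∈ P.divisors with l ∣ d, (selbergDenominator s z)⁻¹ *
          ∑ m ∈ P.divisors with d ∣ m, μ d * if (m : ℝ) ≤ z then s.selbergTerms m else 0 :=
        sum_congr rfl fun d hd =>
          nu_mul_selbergWeight (Nat.dvd_of_mem_divisors (mem_of_mem_filter d hd))
    _ = (selbergDenominator s z)⁻¹ * ∑ m ∈ P.divisors, (∑ d ∈ m.divisors with l ∣ d, (μ d : ℝ)) *
          if (m : ℝ) ≤ z then s.selbergTerms m else 0 := by
        rw [← mul_sum, sum_comm' (t' := P.divisors) (s' := fun m => m.divisors.filter (l ∣ ·))]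
        · simp only [sum_mul]
        · simp only [mem_filter, Nat.mem_divisors]
          exact fun d m =>
            ⟨fun ⟨⟨_, h⟩, ⟨h₁, _⟩, h₂⟩ => ⟨⟨⟨h₂, ne_zero_of_dvd_ne_zero hP h₁⟩, h⟩, h₁, hP⟩,
            fun ⟨⟨⟨h₂, _⟩, h⟩, h₁, _⟩ => ⟨⟨⟨h₂.trans h₁, hP⟩, h⟩, ⟨h₁, hP⟩, h₂⟩⟩
    _ = (selbergDenominator s z)⁻¹ * ∑ m ∈ P.divisors, if l = m then
          (μ l * if (l : ℝ) ≤ z then s.selbergTerms l else 0) else 0 := by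
        congr 1
        refine sum_congr rfl fun m hm => ?_
        rw [sum_divisors_filter_dvd_moebius (squarefree_of_mem_divisors_prodPrimes hm)]
        by_cases h : l = m <;> simp [h]
    _ = _ := by
        simp only [sum_ite_eq, mem_filter]
        split_ifs <;> simp_all [div_eq_inv_mul]

lemma mainSum_lambdaSquared_selbergWeight (hz : 1 ≤ z) :
    s.mainSum (lambdaSquared (selbergWeight s z)) = (selbergDenominator s z)⁻¹ := by
  have hG : selbergDenominator s z ≠ 0 := (selbergDenominator_pos hz).ne'
  have hterm : ∀ l ∈ s.prodPrimes.divisors.filter (fun l : ℕ => (l : ℝ) ≤ z),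
      (s.selbergTerms l)⁻¹ * (μ l * s.selbergTerms l / selbergDenominator s z) ^ 2 =
        s.selbergTerms l / selbergDenominator s z ^ 2 := fun l hl => by
    have hl' := Nat.dvd_of_mem_divisors (mem_of_mem_filter l hl)
    have hg : s.selbergTerms l ≠ 0 := (selbergTerms_pos hl').ne'
    have hμ : (μ l : ℝ) ^ 2 = 1 := by
      exact_mod_cast moebius_sq_eq_one_of_squarefree (squarefree_of_dvd_prodPrimes hl')
    rw [div_pow, mul_pow, hμ]
    field_simp
  rw [mainSum_lambdaSquared_eq_sum_mul_sum_sq]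
  simp only [← sum_filter, sum_nu_mul_selbergWeight]
  simp only [ite_pow, mul_ite, zero_pow two_ne_zero, mul_zero]
  rw [sum_ite_mem, inter_eq_right.2 (filter_subset _ _), sum_congr rfl hterm, ← sum_div,
    ← truncatedDivisorSum, ← selbergDenominator]
  field_simp

theorem siftedSum_le_totalMass_div_add (s : BoundingSieve) (hz : 1 ≤ z) :
    s.siftedSum ≤ s.totalMass / selbergDenominator s z +
      ∑ d₁ ∈ s.prodPrimes.divisors.filter (fun d : ℕ => (d : ℝ) ≤ z),
        ∑ d₂ ∈ s.prodPrimes.divisors.filter (fun d : ℕ => (d : ℝ) ≤ z),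
          |s.rem (d₁.lcm d₂)| := by
  have hw : ∀ d ∈ s.prodPrimes.divisors, |selbergWeight s z d| ≤ if (d : ℝ) ≤ z then 1 else 0 := by
    intro d hd
    split_ifs with h
    · exact abs_selbergWeight_le_one hz (Nat.dvd_of_mem_divisors hd)
    · rw [selbergWeight_eq_zero (not_le.1 h), abs_zero]
  have hsieve := siftedSum_le_mainSum_errSum_of_upperMoebius (s := s) _
    (upperMoebius_lambdaSquared _ (selbergWeight_one (s := s) hz))
  rw [mainSum_lambdaSquared_selbergWeight hz, ← div_eq_mul_inv] at hsieve
  refine hsieve.trans (add_le_add_right ((errSum_lambdaSquared_le s _).trans ?_) _)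
  calc ∑ d₁ ∈ s.prodPrimes.divisors, ∑ d₂ ∈ s.prodPrimes.divisors,
        |selbergWeight s z d₁| * |selbergWeight s z d₂| * |s.rem (d₁.lcm d₂)|
      ≤ ∑ d₁ ∈ s.prodPrimes.divisors, ∑ d₂ ∈ s.prodPrimes.divisors,
        (if (d₁ : ℝ) ≤ z then 1 else 0) * (if (d₂ : ℝ) ≤ z then 1 else 0) *
          |s.rem (d₁.lcm d₂)| := by
        gcongr with d₁ h₁ d₂ h₂
        exacts [hw d₁ h₁, hw d₂ h₂]
    _ = _ := by
        simp only [sum_filter, ite_mul, one_mul, zero_mul]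
        exact sum_congr rfl fun d₁ _ => by split_ifs <;> simp

end SelbergBound

section RootCount

open Polynomial

/-- The number `ρ(d)` of zeros of `f` modulo `d`. -/
noncomputable def rootCount (f : ℤ[X]) (d : ℕ) : ℕ := Nat.card {r : ZMod d // aeval r f = 0}

variable (f : ℤ[X])

lemma rootCount_one : rootCount f 1 = 1 :=
  Nat.card_eq_one_iff_unique.2 ⟨inferInstance, ⟨⟨0, Subsingleton.elim _ _⟩⟩⟩

lemma rootCount_mul {a b : ℕ} (hab : a.Coprime b) :
    rootCount f (a * b) = rootCount f a * rootCount f b := by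
  rw [rootCount, rootCount, rootCount, ← Nat.card_prod]
  refine Nat.card_congr (((ZMod.chineseRemainder hab).toEquiv.subtypeEquiv fun r => ?_).trans
    Equiv.subtypeProdEquivProd)
  set φ := ZMod.chineseRemainder hab
  have hfst : aeval (φ r).1 f = (φ (aeval r f)).1 :=
    aeval_algHom_apply ((RingHom.fst _ _).comp φ.toRingHom).toIntAlgHom r f
  have hsnd : aeval (φ r).2 f = (φ (aeval r f)).2 :=
    aeval_algHom_apply ((RingHom.snd _ _).comp φ.toRingHom).toIntAlgHom r f
  calc aeval r f = 0 ↔ φ (aeval r f) = 0 := (map_eq_zero_iff φ φ.injective).symm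
    _ ↔ aeval (φ r).1 f = 0 ∧ aeval (φ r).2 f = 0 := by rw [hfst, hsnd]; exact Prod.ext_iff

/-- The density `ν(d) = ρ(d) / d` of the integers `n` with `d ∣ f n`. -/
noncomputable def rootDensity : ArithmeticFunction ℝ :=
  ⟨fun d => rootCount f d / d, by simp⟩

lemma rootDensity_apply (d : ℕ) : rootDensity f d = rootCount f d / d := rfl

lemma isMultiplicative_rootDensity : (rootDensity f).IsMultiplicative := by
  refine ⟨by simp [rootDensity_apply, rootCount_one], fun {a b} hab => ?_⟩
  simp only [rootDensity_apply, rootCount_mul f hab, Nat.cast_mul, mul_div_mul_comm]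

lemma rootCount_le_card_divisors {d : ℕ} (hd : Squarefree d)
    (hρ : ∀ p ∈ d.primeFactors, rootCount f p ≤ 2) : rootCount f d ≤ #d.divisors := by
  induction d using induction_on_primes with
  | zero => simp at hd
  | one => simp [rootCount_one]
  | prime_mul p b hp ih =>
    obtain ⟨hpb, -, hb⟩ := Nat.squarefree_mul_iff.1 hd
    have hρb : ∀ q ∈ b.primeFactors, rootCount f q ≤ 2 := fun q hq =>
      hρ q (Nat.primeFactors_mono (dvd_mul_left b p) hd.ne_zero hq)
    have hρp : rootCount f p ≤ 2 :=
      hρ p (Nat.mem_primeFactors.2 ⟨hp, dvd_mul_right p b, hd.ne_zero⟩)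
    rw [rootCount_mul f hpb, hpb.card_divisors_mul, hp.divisors, card_pair hp.ne_one.symm]
    exact mul_le_mul' hρp (ih hb hρb)

lemma abs_card_filter_natCast_eq_sub_le_one {d : ℕ} [NeZero d] (r : ZMod d) (N : ℕ) :
    |(#{n ∈ Ioc 0 N | ((n : ℕ) : ZMod d) = r} : ℝ) - N / d| ≤ 1 := by
  have hd : (0 : ℚ) < d := by exact_mod_cast Nat.pos_of_neZero d
  have hcard := Nat.Ioc_filter_modEq_card 0 N (Nat.pos_of_neZero d) r.val
  simp only [← ZMod.natCast_eq_natCast_iff, ZMod.natCast_zmod_val] at hcard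
  have hle : ((0 : ℕ) - r.val : ℚ) / d ≤ (N - r.val) / d := by gcongr; simp
  rw [max_eq_left (sub_nonneg.2 (Int.floor_mono hle))] at hcard
  have hsplit : (N - r.val : ℚ) / d = ((0 : ℕ) - r.val : ℚ) / d + N / d := by
    rw [Nat.cast_zero]; ring
  have hbound : |(#{n ∈ Ioc 0 N | ((n : ℕ) : ZMod d) = r} : ℚ) - N / d| ≤ 1 := by
    rw [← Int.cast_natCast #_, hcard, abs_le]
    push_cast
    constructor <;> linarith [Int.floor_le ((N - r.val : ℚ) / d),
      Int.lt_floor_add_one ((N - r.val : ℚ) / d), Int.floor_le (((0 : ℕ) - r.val : ℚ) / d),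
      Int.lt_floor_add_one (((0 : ℕ) - r.val : ℚ) / d)]
  simpa only [Rat.cast_abs, Rat.cast_sub, Rat.cast_div, Rat.cast_natCast, Rat.cast_one]
    using (Rat.cast_le (K := ℝ)).2 hbound

lemma natCast_dvd_eval_iff (d n : ℕ) :
    (d : ℤ) ∣ f.eval (n : ℤ) ↔ aeval (n : ZMod d) f = 0 := by
  have h : aeval (n : ZMod d) f = ((f.eval (n : ℤ) : ℤ) : ZMod d) := by
    simpa using aeval_algebraMap_apply_eq_algebraMap_eval (A := ZMod d) (n : ℤ) f
  rw [h, ZMod.intCast_zmod_eq_zero_iff_dvd]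

lemma abs_card_filter_dvd_eval_sub_le {d : ℕ} (hd : d ≠ 0) (N : ℕ) :
    |(#{n ∈ Ioc 0 N | (d : ℤ) ∣ f.eval ((n : ℕ) : ℤ)} : ℝ) - rootDensity f d * N| ≤
      rootCount f d := by
  have : NeZero d := ⟨hd⟩
  set R : Finset (ZMod d) := univ.filter fun r => aeval r f = 0
  have hR : rootCount f d = #R := by
    rw [rootCount, Nat.card_eq_fintype_card, Fintype.card_subtype]
  have hfiber : #{n ∈ Ioc 0 N | (d : ℤ) ∣ f.eval ((n : ℕ) : ℤ)} =
      ∑ r ∈ R, #{n ∈ Ioc 0 N | ((n : ℕ) : ZMod d) = r} := by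
    rw [card_eq_sum_card_fiberwise (f := fun n : ℕ => (n : ZMod d)) (t := R)]
    · refine sum_congr rfl fun r hr => congrArg card ?_
      ext n
      simp only [mem_filter, natCast_dvd_eval_iff]
      exact ⟨fun h => ⟨h.1.1, h.2⟩, fun h => ⟨⟨h.1, h.2 ▸ (mem_filter.1 hr).2⟩, h.2⟩⟩
    · intro n hn
      simpa [R, natCast_dvd_eval_iff] using (mem_filter.1 hn).2
  have hmain : rootDensity f d * N = ∑ _r ∈ R, (N / d : ℝ) := by
    rw [sum_const, nsmul_eq_mul, rootDensity_apply, hR]; ring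
  rw [hfiber, hmain, Nat.cast_sum, ← sum_sub_distrib, hR]
  calc |∑ r ∈ R, ((#{n ∈ Ioc 0 N | ((n : ℕ) : ZMod d) = r} : ℝ) - N / d)|
      ≤ ∑ r ∈ R, |(#{n ∈ Ioc 0 N | ((n : ℕ) : ZMod d) = r} : ℝ) - N / d| := abs_sum_le_sum_abs _ _
    _ ≤ ∑ r ∈ R, 1 := sum_le_sum fun r _ => abs_card_filter_natCast_eq_sub_le_one r N
    _ = #R := by simp

end RootCount

section DivisorSums

lemma sum_card_divisors_le {z : ℝ} (hz : 1 ≤ z) :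
    ∑ n ∈ Ioc 0 ⌊z⌋₊, (#n.divisors : ℝ) ≤ z * (1 + log z) := by
  have hswap : ∑ n ∈ Ioc 0 ⌊z⌋₊, #n.divisors = ∑ n ∈ Ioc 0 ⌊z⌋₊, ⌊z⌋₊ / n := by
    simpa only [sigma_zero_apply] using sum_Ioc_sigma0_eq_sum_div ⌊z⌋₊
  have hharm : ∑ n ∈ Ioc 0 ⌊z⌋₊, (n : ℝ)⁻¹ ≤ 1 + log z := by
    have h := harmonic_floor_le_one_add_log z hz
    rw [harmonic_eq_sum_Icc] at h
    push_cast at h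
    exact h
  calc ∑ n ∈ Ioc 0 ⌊z⌋₊, (#n.divisors : ℝ)
      = ∑ n ∈ Ioc 0 ⌊z⌋₊, ((⌊z⌋₊ / n : ℕ) : ℝ) := by exact_mod_cast hswap
    _ ≤ ∑ n ∈ Ioc 0 ⌊z⌋₊, z * (n : ℝ)⁻¹ := by
        refine sum_le_sum fun n _ => Nat.cast_div_le.trans ?_
        rw [div_eq_mul_inv]
        gcongr
        exact Nat.floor_le (by linarith)
    _ ≤ z * (1 + log z) := by rw [← mul_sum]; gcongr

lemma log_le_sum_inv {y : ℝ} (hy : 0 ≤ y) : log y ≤ ∑ n ∈ Ioc 0 ⌊y⌋₊, (n : ℝ)⁻¹ := by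
  have h := log_le_harmonic_floor y hy
  rw [harmonic_eq_sum_Icc] at h
  push_cast at h
  exact h

lemma sum_card_divisors_div_eq (N : ℕ) :
    ∑ n ∈ Ioc 0 N, (#n.divisors : ℝ) / n =
      ∑ a ∈ Ioc 0 N, (a : ℝ)⁻¹ * ∑ b ∈ Ioc 0 (N / a), (b : ℝ)⁻¹ := by
  let u : ArithmeticFunction ℝ := ⟨fun n => (n : ℝ)⁻¹, by simp⟩
  have hu : ∀ n, (u * u) n = (#n.divisors : ℝ) / n := fun n => by
    have hterm : ∀ x ∈ n.divisorsAntidiagonal, u x.1 * u x.2 = (n : ℝ)⁻¹ := fun x hx => by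
      rw [← (Nat.mem_divisorsAntidiagonal.1 hx).1]
      simp [u, mul_comm]
    rw [mul_apply, sum_congr rfl hterm, sum_const, nsmul_eq_mul, div_eq_mul_inv,
      ← Nat.map_div_right_divisors, card_map]
  simpa only [hu, u, coe_mk] using sum_Ioc_mul_eq_sum_sum u u N

lemma sq_posLog_div_sub_sq_posLog_div_succ_le {y : ℝ} (hy : 0 ≤ y) {a : ℕ} (ha : 0 < a) :
    log⁺ (y / a) ^ 2 - log⁺ (y / (a + 1 : ℕ)) ^ 2 ≤ 2 * ((a : ℝ)⁻¹ * log⁺ (y / a)) := by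
  have : (0 : ℝ) < a := by exact_mod_cast ha
  have hratio : log⁺ (1 + (a : ℝ)⁻¹) ≤ (a : ℝ)⁻¹ :=
    max_le (by positivity) <| by
      linarith [log_le_sub_one_of_pos (x := 1 + (a : ℝ)⁻¹) (by positivity)]
  have hfactor : y / a = y / (a + 1 : ℕ) * (1 + (a : ℝ)⁻¹) := by push_cast; field_simp
  have hsub : log⁺ (y / a) ≤ log⁺ (y / (a + 1 : ℕ)) + (a : ℝ)⁻¹ :=
    (hfactor ▸ posLog_mul).trans (add_le_add_right hratio _)
  have hmono : log⁺ (y / (a + 1 : ℕ)) ≤ log⁺ (y / a) :=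
    posLog_le_posLog (by positivity) (by gcongr; simp)
  have : 0 ≤ (a : ℝ)⁻¹ := by positivity
  nlinarith [posLog_nonneg (x := y / (a + 1 : ℕ))]

/-- The sum is at least `∑_{a ≤ y} log⁺ (y / a) / a`, an upper Riemann sum of
`∫ log (y / t) dt / t = (log y)² / 2`. -/
lemma sq_log_div_two_le_sum_card_divisors_div {y : ℝ} (hy : 0 ≤ y) :
    log⁺ y ^ 2 / 2 ≤ ∑ n ∈ Ioc 0 ⌊y⌋₊, (#n.divisors : ℝ) / n := by
  set F : ℕ → ℝ := fun a => log⁺ (y / a) ^ 2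
  have htelescope : ∀ N : ℕ, ∑ a ∈ Ioc 0 N, (F a - F (a + 1)) = F 1 - F (N + 1) := fun N => by
    induction N with
    | zero => simp
    | succ N ih => rw [sum_Ioc_succ_top (Nat.zero_le N), ih, sub_add_sub_cancel]
  have hlast : F (⌊y⌋₊ + 1) = 0 := by
    have hpos : (0 : ℝ) < (⌊y⌋₊ + 1 : ℕ) := by positivity
    have hlt : y / (⌊y⌋₊ + 1 : ℕ) ≤ 1 :=
      (div_le_one hpos).2 (by exact_mod_cast (Nat.lt_floor_add_one y).le)
    simp only [F, (posLog_eq_zero_iff _).2 (abs_le.2 ⟨by linarith [div_nonneg hy hpos.le], hlt⟩)]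
    norm_num
  have hinner : ∀ a : ℕ, log⁺ (y / a) ≤ ∑ b ∈ Ioc 0 (⌊y⌋₊ / a), (b : ℝ)⁻¹ := fun a => by
    rw [← Nat.floor_div_natCast]
    exact max_le (by positivity) (log_le_sum_inv (by positivity))
  rw [sum_card_divisors_div_eq]
  calc log⁺ y ^ 2 / 2 = (∑ a ∈ Ioc 0 ⌊y⌋₊, (F a - F (a + 1))) / 2 := by
        rw [htelescope, hlast]; simp [F]
    _ ≤ (∑ a ∈ Ioc 0 ⌊y⌋₊, 2 * ((a : ℝ)⁻¹ * log⁺ (y / a))) / 2 := by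
        gcongr with a ha
        exact sq_posLog_div_sub_sq_posLog_div_succ_le hy (mem_Ioc.1 ha).1
    _ = ∑ a ∈ Ioc 0 ⌊y⌋₊, (a : ℝ)⁻¹ * log⁺ (y / a) := by rw [← mul_sum]; ring
    _ ≤ _ := by gcongr with a; exact hinner a

end DivisorSums

section PolynomialSieve

open Polynomial

variable {f : ℤ[X]} {N P : ℕ} {z : ℝ}

/-- The sieve problem of removing from the values `f 1, …, f N` those with a prime factor
dividing `P`. The values enter through their absolute values, weighted by multiplicity. -/
noncomputable def polynomialSieve (f : ℤ[X]) (N : ℕ) {P : ℕ} (hP : Squarefree P)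
    (hpos : ∀ p, p.Prime → p ∣ P → 0 < rootCount f p)
    (hlt : ∀ p, p.Prime → p ∣ P → rootCount f p < p) : BoundingSieve where
  support := (Ioc 0 N).image fun n : ℕ => (f.eval (n : ℤ)).natAbs
  prodPrimes := P
  prodPrimes_squarefree := hP
  weights m := #{n ∈ Ioc 0 N | (f.eval ((n : ℕ) : ℤ)).natAbs = m}
  weights_nonneg _ := Nat.cast_nonneg _
  totalMass := N
  nu := rootDensity f
  nu_mult := isMultiplicative_rootDensity f
  nu_pos_of_prime p hp hpP :=
    div_pos (Nat.cast_pos.2 (hpos p hp hpP)) (Nat.cast_pos.2 hp.pos)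
  nu_lt_one_of_prime p hp hpP :=
    (div_lt_one (Nat.cast_pos.2 hp.pos)).2 (Nat.cast_lt.2 (hlt p hp hpP))

lemma sum_image_ite_card_fiber {ι κ : Type*} [DecidableEq κ] (s : Finset ι) (g : ι → κ)
    (Q : κ → Prop) [DecidablePred Q] :
    (∑ m ∈ s.image g, if Q m then (#{n ∈ s | g n = m} : ℝ) else 0) = #{n ∈ s | Q (g n)} := by
  have h := sum_comp (s := s) (fun m => if Q m then (1 : ℝ) else 0) g
  simp only [nsmul_eq_mul, mul_ite, mul_one, mul_zero] at h
  rw [← h, sum_boole]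

section

variable (hP : Squarefree P) (hpos : ∀ p, p.Prime → p ∣ P → 0 < rootCount f p)
  (hlt : ∀ p, p.Prime → p ∣ P → rootCount f p < p)

lemma siftedSum_polynomialSieve :
    (polynomialSieve f N hP hpos hlt).siftedSum =
      #{n ∈ Ioc 0 N | P.Coprime (f.eval ((n : ℕ) : ℤ)).natAbs} :=
  sum_image_ite_card_fiber _ _ _

lemma multSum_polynomialSieve (d : ℕ) :
    (polynomialSieve f N hP hpos hlt).multSum d =
      #{n ∈ Ioc 0 N | (d : ℤ) ∣ f.eval ((n : ℕ) : ℤ)} := by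
  simp only [Int.natCast_dvd]
  exact sum_image_ite_card_fiber _ _ _

lemma abs_rem_polynomialSieve_le {d : ℕ} (hd : d ≠ 0) :
    |(polynomialSieve f N hP hpos hlt).rem d| ≤ rootCount f d := by
  rw [BoundingSieve.rem, multSum_polynomialSieve]
  exact abs_card_filter_dvd_eval_sub_le f hd N

end

lemma card_divisors_lcm_le {a b : ℕ} (ha : a ≠ 0) (hb : b ≠ 0) :
    #(a.lcm b).divisors ≤ #a.divisors * #b.divisors := by
  calc #(a.lcm b).divisors ≤ #(a * b).divisors :=
        card_le_card (Nat.divisors_subset_of_dvd (mul_ne_zero ha hb) (Nat.lcm_dvd_mul a b))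
    _ ≤ #a.divisors * #b.divisors := by
        open scoped Pointwise in
        rw [Nat.divisors_mul]
        exact card_mul_le

theorem card_coprime_eval_le (hP : Squarefree P)
    (hpos : ∀ p, p.Prime → p ∣ P → 0 < rootCount f p)
    (hlt : ∀ p, p.Prime → p ∣ P → rootCount f p < p)
    (hle : ∀ p, p.Prime → p ∣ P → rootCount f p ≤ 2) (hz : 1 ≤ z) :
    (#{n ∈ Ioc 0 N | P.Coprime (f.eval ((n : ℕ) : ℤ)).natAbs} : ℝ) ≤
      N / selbergDenominator (polynomialSieve f N hP hpos hlt) z + (z * (1 + log z)) ^ 2 := by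
  set s := polynomialSieve f N hP hpos hlt
  set D := P.divisors.filter fun d : ℕ => (d : ℝ) ≤ z
  have hrem : ∀ d₁ ∈ D, ∀ d₂ ∈ D,
      |s.rem (d₁.lcm d₂)| ≤ (#d₁.divisors : ℝ) * #d₂.divisors := by
    intro d₁ h₁ d₂ h₂
    have h₁ := Nat.dvd_of_mem_divisors (mem_of_mem_filter d₁ h₁)
    have h₂ := Nat.dvd_of_mem_divisors (mem_of_mem_filter d₂ h₂)
    have hlcm : d₁.lcm d₂ ∣ P := Nat.lcm_dvd h₁ h₂
    have hroots : rootCount f (d₁.lcm d₂) ≤ #d₁.divisors * #d₂.divisors :=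
      (rootCount_le_card_divisors f (hP.squarefree_of_dvd hlcm) fun p hp =>
        hle p (Nat.prime_of_mem_primeFactors hp)
          ((Nat.dvd_of_mem_primeFactors hp).trans hlcm)).trans
      (card_divisors_lcm_le (ne_zero_of_dvd_ne_zero hP.ne_zero h₁)
        (ne_zero_of_dvd_ne_zero hP.ne_zero h₂))
    exact (abs_rem_polynomialSieve_le hP hpos hlt (ne_zero_of_dvd_ne_zero hP.ne_zero hlcm)).trans
      (by exact_mod_cast hroots)
  have hD : D ⊆ Ioc 0 ⌊z⌋₊ := fun d hd =>
    mem_Ioc.2 ⟨Nat.pos_of_mem_divisors (mem_of_mem_filter d hd), Nat.le_floor (mem_filter.1 hd).2⟩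
  have hsieve := siftedSum_le_totalMass_div_add s hz
  rw [siftedSum_polynomialSieve hP hpos hlt] at hsieve
  refine hsieve.trans (add_le_add_right ?_ _)
  have hsum : ∑ d ∈ D, (#d.divisors : ℝ) ≤ z * (1 + log z) :=
    (sum_le_sum_of_subset_of_nonneg hD fun _ _ _ => Nat.cast_nonneg _).trans
      (sum_card_divisors_le hz)
  calc ∑ d₁ ∈ D, ∑ d₂ ∈ D, |s.rem (d₁.lcm d₂)|
      ≤ ∑ d₁ ∈ D, ∑ d₂ ∈ D, (#d₁.divisors : ℝ) * #d₂.divisors :=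
        sum_le_sum fun d₁ h₁ => sum_le_sum fun d₂ h₂ => hrem d₁ h₁ d₂ h₂
    _ = (∑ d ∈ D, (#d.divisors : ℝ)) ^ 2 := by rw [sq, sum_mul_sum]
    _ ≤ (z * (1 + log z)) ^ 2 := pow_le_pow_left₀ (sum_nonneg fun _ _ => Nat.cast_nonneg _) hsum 2

end PolynomialSieve

section LogSquareBound

variable {f t : ArithmeticFunction ℝ}

lemma sum_le_prod_of_primeFactors_eq (hf : f.IsMultiplicative) (hf0 : ∀ n, 0 ≤ f n)
    (hft : ∀ p, p.Prime → ∀ K, ∑ k ∈ Ico 1 K, f (p ^ k) ≤ t p) {S s : Finset ℕ}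
    (hS0 : 0 ∉ S) (hS : ∀ n ∈ S, n.primeFactors = s) (hs : ∀ p ∈ s, p.Prime) :
    ∑ n ∈ S, f n ≤ ∏ p ∈ s, t p := by
  have hne : ∀ n ∈ S, n ≠ 0 := fun n hn h => hS0 (h ▸ hn)
  set K := S.sup id
  set e : ℕ → ∀ p ∈ s, ℕ := fun n p _ => n.factorization p
  have hfac : ∀ n ∈ S, f n = ∏ p ∈ s.attach, f (p.1 ^ e n p.1 p.2) := fun n hn => by
    rw [hf.multiplicative_factorization f (hne n hn), Nat.prod_factorization_eq_prod_primeFactors,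
      hS n hn, prod_attach s fun p => f (p ^ n.factorization p)]
  have hinj : Set.InjOn e S := fun m hm n hn hmn => by
    refine Nat.eq_of_factorization_eq (hne m hm) (hne n hn) fun p => ?_
    by_cases hp : p ∈ s
    · exact congrFun₂ hmn p hp
    · have hzero : ∀ l ∈ S, l.factorization p = 0 := fun l hl =>
        Finsupp.notMem_support_iff.1 (by rwa [Nat.support_factorization, hS l hl])
      rw [hzero m hm, hzero n hn]
  have hmem : ∀ n ∈ S, e n ∈ s.pi fun _ => Ico 1 K := fun n hn => mem_pi.2 fun p hp => by
    have hpn : p ∣ n := Nat.dvd_of_mem_primeFactors (hS n hn ▸ hp)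
    exact mem_Ico.2 ⟨(hs p hp).factorization_pos_of_dvd (hne n hn) hpn,
      (Nat.factorization_lt p (hne n hn)).trans_le (le_sup (f := id) hn)⟩
  calc ∑ n ∈ S, f n = ∑ x ∈ S.image e, ∏ p ∈ s.attach, f (p.1 ^ x p.1 p.2) := by
        rw [sum_image hinj]; exact sum_congr rfl hfac
    _ ≤ ∑ x ∈ s.pi fun _ => Ico 1 K, ∏ p ∈ s.attach, f (p.1 ^ x p.1 p.2) :=
        sum_le_sum_of_subset_of_nonneg (image_subset_iff.2 hmem) fun _ _ _ =>
          prod_nonneg fun _ _ => hf0 _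
    _ = ∏ p ∈ s, ∑ k ∈ Ico 1 K, f (p ^ k) := (prod_sum s _ fun p k => f (p ^ k)).symm
    _ ≤ ∏ p ∈ s, t p :=
        prod_le_prod (fun _ _ => sum_nonneg fun _ _ => hf0 _) fun p hp => hft p (hs p hp) K

lemma sum_le_truncatedDivisorSum (hf : f.IsMultiplicative) (ht : t.IsMultiplicative)
    (hf0 : ∀ n, 0 ≤ f n) (hft : ∀ p, p.Prime → ∀ K, ∑ k ∈ Ico 1 K, f (p ^ k) ≤ t p) {P : ℕ}
    (hP : Squarefree P) {z : ℝ} (hPz : primorial ⌊z⌋₊ ∣ P) (hz : 0 ≤ z) :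
    ∑ n ∈ Ioc 0 ⌊z⌋₊, f n ≤ truncatedDivisorSum t P z := by
  set rad : ℕ → ℕ := fun n => ∏ p ∈ n.primeFactors, p
  have hmaps : ∀ n ∈ Ioc 0 ⌊z⌋₊, rad n ∈ P.divisors.filter fun d : ℕ => (d : ℝ) ≤ z := by
    intro n hn
    obtain ⟨hn0, hnz⟩ := mem_Ioc.1 hn
    have hrad : rad n ≤ n := Nat.le_of_dvd hn0 (Nat.prod_primeFactors_dvd n)
    refine mem_filter.2 ⟨Nat.mem_divisors.2 ⟨dvd_trans ?_ hPz, hP.ne_zero⟩,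
      (Nat.le_floor_iff hz).1 (hrad.trans hnz)⟩
    refine prod_dvd_prod_of_subset _ _ _ fun p hp => ?_
    exact mem_filter.2 ⟨mem_range.2 (Nat.lt_succ_of_le ((Nat.le_of_mem_primeFactors hp).trans hnz)),
      Nat.prime_of_mem_primeFactors hp⟩
  rw [← sum_fiberwise_of_maps_to hmaps, truncatedDivisorSum]
  refine sum_le_sum fun d hd => ?_
  have hd : Squarefree d := hP.squarefree_of_dvd (Nat.dvd_of_mem_divisors (mem_of_mem_filter d hd))
  have htd : ∏ p ∈ d.primeFactors, t p = t d := by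
    rw [← ht.map_prod_of_subset_primeFactors d _ subset_rfl, Nat.prod_primeFactors_of_squarefree hd]
  rw [← htd]
  refine sum_le_prod_of_primeFactors_eq hf hf0 hft (by simp) (fun n hn => ?_) fun p hp =>
    Nat.prime_of_mem_primeFactors hp
  rw [← (mem_filter.1 hn).2, Nat.primeFactors_prod_primeFactors]

/-- The arithmetic function `n ↦ τ(n) / n`. -/
noncomputable def divisorDensity : ArithmeticFunction ℝ := ⟨fun n => #n.divisors / n, by simp⟩

lemma divisorDensity_apply (n : ℕ) : divisorDensity n = #n.divisors / n := rfl

lemma isMultiplicative_divisorDensity : divisorDensity.IsMultiplicative := by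
  refine ⟨by simp [divisorDensity_apply], fun {m n} hmn => ?_⟩
  simp only [divisorDensity_apply, hmn.card_divisors_mul, Nat.cast_mul, mul_div_mul_comm]

/-- The multiplicative function `t` with `t(p ^ k) = (1 - 1/p)⁻² - 1 = ∑_{j ≥ 1} τ(p ^ j) / p ^ j`
for all `k ≥ 1`; it majorizes `τ(n) / n` summed over the `n` with a given radical. -/
noncomputable def divisorMajorant : ArithmeticFunction ℝ :=
  prodPrimeFactors fun p => ((1 - (p : ℝ)⁻¹) ^ 2)⁻¹ - 1

lemma divisorMajorant_prime {p : ℕ} (hp : p.Prime) :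
    divisorMajorant p = ((1 - (p : ℝ)⁻¹) ^ 2)⁻¹ - 1 := by
  rw [divisorMajorant, prodPrimeFactors_apply hp.ne_zero, hp.primeFactors, prod_singleton]

lemma sum_divisorDensity_pow_le {p : ℕ} (hp : p.Prime) (K : ℕ) :
    ∑ k ∈ Ico 1 K, divisorDensity (p ^ k) ≤ divisorMajorant p := by
  set x : ℝ := (p : ℝ)⁻¹
  have hx0 : 0 ≤ x := by positivity
  have hx1 : x < 1 := inv_lt_one_of_one_lt₀ (by exact_mod_cast hp.one_lt)
  have hx : ‖x‖ < 1 := by rwa [norm_of_nonneg hx0]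
  have hval : ∀ k : ℕ, divisorDensity (p ^ k) = k * x ^ k + x ^ k := fun k => by
    rw [divisorDensity_apply, Nat.divisors_prime_pow hp, card_map, card_range, inv_pow]
    push_cast
    ring
  have hsum : HasSum (fun k : ℕ => divisorDensity (p ^ k)) ((1 - x) ^ 2)⁻¹ := by
    have hgeom := (hasSum_coe_mul_geometric_of_norm_lt_one hx).add
      (hasSum_geometric_of_norm_lt_one hx)
    have hx1' : 1 - x ≠ 0 := by linarith
    convert! hgeom using 1
    · exact funext hval
    · field_simp; ring
  have hle := sum_le_hasSum (insert 0 (Ico 1 K)) (fun k _ => by rw [hval]; positivity) hsum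
  rw [sum_insert (by simp), hval 0] at hle
  rw [divisorMajorant_prime hp]
  norm_num at hle
  linarith

lemma divisorMajorant_nonneg (n : ℕ) : 0 ≤ divisorMajorant n := by
  rcases eq_or_ne n 0 with rfl | hn
  · simp
  rw [divisorMajorant, prodPrimeFactors_apply hn]
  refine prod_nonneg fun p hp => ?_
  have hp := Nat.prime_of_mem_primeFactors hp
  simpa [divisorMajorant_prime hp] using sum_divisorDensity_pow_le hp 0

lemma isMultiplicative_divisorMajorant : divisorMajorant.IsMultiplicative :=
  IsMultiplicative.prodPrimeFactors _

lemma sq_posLog_div_two_le_truncatedDivisorSum {P : ℕ} (hP : Squarefree P) {z : ℝ}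
    (hPz : primorial ⌊z⌋₊ ∣ P) (hz : 0 ≤ z) :
    log⁺ z ^ 2 / 2 ≤ truncatedDivisorSum divisorMajorant P z :=
  (sq_log_div_two_le_sum_card_divisors_div hz).trans <|
    sum_le_truncatedDivisorSum isMultiplicative_divisorDensity isMultiplicative_divisorMajorant
      (fun _ => by rw [divisorDensity_apply]; positivity)
      (fun _ hp => sum_divisorDensity_pow_le hp) hP hPz hz

end LogSquareBound

section TwinPrimeConstant

/-- The local factor `1 - 1 / (p - 1) ^ 2` of the twin-prime constant at an odd prime `p`; it is
`1` at `p = 2`. -/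
noncomputable def twinFactor (p : ℕ) : ℝ := if 2 < p then 1 - 1 / ((p : ℝ) - 1) ^ 2 else 1

lemma twinFactor_pos (p : ℕ) : 0 < twinFactor p := by
  unfold twinFactor
  split_ifs with hp
  · have : (3 : ℝ) ≤ p := by exact_mod_cast hp
    rw [sub_pos, div_lt_one (by nlinarith)]
    nlinarith
  · exact one_pos

lemma twinFactor_le_one (p : ℕ) : twinFactor p ≤ 1 := by
  unfold twinFactor
  split_ifs
  exacts [sub_le_self _ (by positivity), le_rfl]

lemma summable_norm_twinFactor_sub_one : Summable fun p : Nat.Primes => ‖twinFactor p - 1‖ := by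
  have hsq : Summable fun p : Nat.Primes => 4 * (1 / ((p : ℕ) : ℝ) ^ 2) :=
    ((summable_one_div_nat_pow.2 one_lt_two).mul_left 4).comp_injective Nat.Primes.coe_nat_injective
  refine hsq.of_nonneg_of_le (fun _ => norm_nonneg _) fun p => ?_
  unfold twinFactor
  split_ifs with hp
  · have : (3 : ℝ) ≤ (p : ℕ) := by exact_mod_cast hp
    rw [sub_sub_cancel_left, norm_neg, norm_of_nonneg (by positivity), mul_one_div,
      div_le_div_iff₀ (by nlinarith) (by positivity)]
    nlinarith
  · simp

lemma hasProd_twinFactor : HasProd (fun p : Nat.Primes => twinFactor p) twinConst := by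
  have h := multipliable_one_add_of_summable summable_norm_twinFactor_sub_one
  simp only [add_sub_cancel] at h
  exact h.hasProd

lemma twinConst_pos : 0 < twinConst := by
  have hne := tprod_one_add_ne_zero_of_summable (f := fun p : Nat.Primes => twinFactor p - 1)
    (fun p => by simpa using (twinFactor_pos p).ne') summable_norm_twinFactor_sub_one
  simp only [add_sub_cancel] at hne
  have hnonneg : 0 ≤ twinConst :=
    ge_of_tendsto' hasProd_twinFactor fun s => prod_nonneg fun p _ => (twinFactor_pos p).le
  exact hnonneg.lt_of_ne hne.symm

lemma exists_prod_twinFactor_le {r : ℝ} (hr : 1 < r) :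
    ∃ w : ℕ, Squarefree w ∧ 2 ∣ w ∧ ∏ p ∈ w.primeFactors, twinFactor p ≤ r * twinConst := by
  have hlt : twinConst < r * twinConst := lt_mul_of_one_lt_left twinConst_pos hr
  have hev := hasProd_twinFactor.eventually_le_const hlt
  rw [SummationFilter.unconditional, Filter.eventually_atTop] at hev
  obtain ⟨s, hs⟩ := hev
  set W : Finset ℕ := (insert ⟨2, Nat.prime_two⟩ s).map ⟨_, Nat.Primes.coe_nat_injective⟩
  have hW : ∀ p ∈ W, p.Prime := fun p hp => by
    obtain ⟨q, -, rfl⟩ := mem_map.1 hp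
    exact q.2
  have h2 : 2 ∈ W := mem_map.2 ⟨⟨2, Nat.prime_two⟩, mem_insert_self _ _, rfl⟩
  refine ⟨∏ p ∈ W, p, ?_, dvd_prod_of_mem _ h2, ?_⟩
  · exact squarefree_prod_of_pairwise_isCoprime
      (fun p hp q hq hpq =>
        Nat.coprime_iff_isRelPrime.1 ((Nat.coprime_primes (hW p hp) (hW q hq)).2 hpq))
      fun p hp => (hW p hp).squarefree
  · rw [Nat.primeFactors_prod hW]
    exact (prod_map _ _ _).trans_le (hs _ (subset_insert _ _))

end TwinPrimeConstant

section PairSieve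

open Polynomial

variable {h : ℕ} {z : ℝ}

/-- The polynomial `n (h n + 1)`, whose values are prime to all small primes when `n` and `h n + 1`
are both large primes. -/
noncomputable def pairPolynomial (h : ℕ) : ℤ[X] := X * (C (h : ℤ) * X + 1)

lemma natAbs_eval_pairPolynomial (n : ℕ) :
    ((pairPolynomial h).eval (n : ℤ)).natAbs = n * (h * n + 1) := by
  rw [← Int.natAbs_natCast (n * (h * n + 1))]
  simp [pairPolynomial]

lemma aeval_pairPolynomial_eq_zero_iff {p : ℕ} [Fact p.Prime] (r : ZMod p) :
    aeval r (pairPolynomial h) = 0 ↔ r = 0 ∨ (h : ZMod p) * r + 1 = 0 := by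
  simp [pairPolynomial]

lemma rootCount_pairPolynomial_of_dvd {p : ℕ} (hp : p.Prime) (hph : p ∣ h) :
    rootCount (pairPolynomial h) p = 1 := by
  have : Fact p.Prime := ⟨hp⟩
  have hroots : {r : ZMod p | aeval r (pairPolynomial h) = 0} = {0} := by
    ext r
    simp [aeval_pairPolynomial_eq_zero_iff, (ZMod.natCast_eq_zero_iff h p).2 hph]
  exact (congrArg Set.ncard hroots).trans (Set.ncard_singleton 0)

lemma rootCount_pairPolynomial_of_not_dvd {p : ℕ} (hp : p.Prime) (hph : ¬p ∣ h) :
    rootCount (pairPolynomial h) p = 2 := by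
  have : Fact p.Prime := ⟨hp⟩
  have hh : (h : ZMod p) ≠ 0 := mt (ZMod.natCast_eq_zero_iff h p).1 hph
  have hroots : {r : ZMod p | aeval r (pairPolynomial h) = 0} = {0, -(h : ZMod p)⁻¹} := by
    ext r
    simp only [Set.mem_ofPred_eq, aeval_pairPolynomial_eq_zero_iff, Set.mem_insert_iff,
      Set.mem_singleton_iff]
    rw [← eq_neg_iff_add_eq_zero, ← eq_inv_mul_iff_mul_eq₀ hh, mul_neg_one]
  exact (congrArg Set.ncard hroots).trans
    (Set.ncard_pair (neg_ne_zero.2 (inv_ne_zero hh)).symm)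

lemma rootCount_pairPolynomial {p : ℕ} (hp : p.Prime) :
    rootCount (pairPolynomial h) p = if p ∣ h then 1 else 2 := by
  split_ifs with hph
  exacts [rootCount_pairPolynomial_of_dvd hp hph, rootCount_pairPolynomial_of_not_dvd hp hph]

lemma three_le_of_not_dvd (hh : 2 ∣ h) {p : ℕ} (hp : p.Prime) (hph : ¬p ∣ h) : 3 ≤ p :=
  hp.two_le.lt_of_ne fun h2 => hph (h2 ▸ hh)

/-- The sieve of `n (h n + 1)`, `1 ≤ n ≤ N`, by the primes up to `z`, for even `h`. -/
noncomputable def pairSieve (hh : 2 ∣ h) (N : ℕ) (z : ℝ) : BoundingSieve :=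
  polynomialSieve (pairPolynomial h) N (squarefree_primorial ⌊z⌋₊)
    (fun p hp _ => by rw [rootCount_pairPolynomial hp]; split_ifs <;> norm_num)
    (fun p hp _ => by
      rw [rootCount_pairPolynomial hp]
      split_ifs with hph
      exacts [hp.one_lt, three_le_of_not_dvd hh hp hph])

lemma card_coprime_primorial_le (hh : 2 ∣ h) (N : ℕ) (hz : 1 ≤ z) :
    (#{n ∈ Ioc 0 N | (primorial ⌊z⌋₊).Coprime (n * (h * n + 1))} : ℝ) ≤
      N / selbergDenominator (pairSieve hh N z) z + (z * (1 + log z)) ^ 2 := by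
  simp only [← natAbs_eval_pairPolynomial]
  exact card_coprime_eval_le _ _ _
    (fun p hp _ => by rw [rootCount_pairPolynomial hp]; split_ifs <;> norm_num) hz

lemma card_prime_pairs_le (hh : 2 ∣ h) (h0 : h ≠ 0) (N : ℕ) (hz : 1 ≤ z) :
    (#{q ∈ Ioc 0 N | q.Prime ∧ (h * q + 1).Prime} : ℝ) ≤
      N / selbergDenominator (pairSieve hh N z) z + (z * (1 + log z)) ^ 2 + z := by
  have hcoprime : ∀ {p : ℕ}, p.Prime → ⌊z⌋₊ < p → (primorial ⌊z⌋₊).Coprime p := fun hp hzp =>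
    ((hp.coprime_iff_not_dvd).2 (by rwa [hp.dvd_primorial_iff, not_le])).symm
  have hsub : {q ∈ Ioc 0 N | q.Prime ∧ (h * q + 1).Prime} ⊆
      {n ∈ Ioc 0 N | (primorial ⌊z⌋₊).Coprime (n * (h * n + 1))} ∪ Ioc 0 ⌊z⌋₊ := by
    intro q hq
    obtain ⟨hqN, hq, hq'⟩ := mem_filter.1 hq
    rcases le_or_gt q ⌊z⌋₊ with hqz | hqz
    · exact mem_union_right _ (mem_Ioc.2 ⟨hq.pos, hqz⟩)
    · have hqh : q < h * q + 1 := Nat.lt_succ_of_le (Nat.le_mul_of_pos_left q h0.bot_lt)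
      exact mem_union_left _ <| mem_filter.2
        ⟨hqN, (hcoprime hq hqz).mul_right (hcoprime hq' (hqz.trans hqh))⟩
  have hcard := (card_le_card hsub).trans (card_union_le _ _)
  rw [Nat.card_Ioc, tsub_zero] at hcard
  have hfloor : (⌊z⌋₊ : ℝ) ≤ z := Nat.floor_le (by linarith)
  have hsieve := card_coprime_primorial_le hh N hz
  have hcard : (#{q ∈ Ioc 0 N | q.Prime ∧ (h * q + 1).Prime} : ℝ) ≤
    #{n ∈ Ioc 0 N | (primorial ⌊z⌋₊).Coprime (n * (h * n + 1))} + ⌊z⌋₊ := by exact_mod_cast hcard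
  linarith

end PairSieve

section SingularSeries

variable {h p : ℕ} {z : ℝ}

/-- The product `∏_{p ∣ h, p > 2} (1 + 1 / (p - 2))`, by which the singular series of the pair
`n`, `h n + 1` exceeds that of the twin primes. -/
noncomputable def singularFactor (h : ℕ) : ℝ :=
  ∏ p ∈ h.primeFactors.filter (2 < ·), (1 + 1 / ((p : ℝ) - 2))

/-- The number `c(p)` such that `1 + c(p)` is the local factor of `singularFactor h` at `p`. -/
noncomputable def singularExcess (h p : ℕ) : ℝ := if p ∣ h ∧ 2 < p then 1 / ((p : ℝ) - 2) else 0

lemma singularExcess_nonneg (h p : ℕ) : 0 ≤ singularExcess h p := by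
  unfold singularExcess
  split_ifs with hp
  · have : (2 : ℝ) < p := by exact_mod_cast hp.2
    exact one_div_nonneg.2 (by linarith)
  · exact le_rfl

lemma singularFactor_eq (h : ℕ) :
    singularFactor h = ∏ p ∈ h.primeFactors, (1 + singularExcess h p) := by
  rw [singularFactor, prod_filter]
  refine prod_congr rfl fun p hp => ?_
  simp only [singularExcess, Nat.dvd_of_mem_primeFactors hp, true_and]
  split_ifs <;> simp

lemma one_le_singularFactor (h : ℕ) : 1 ≤ singularFactor h :=
  (one_le_prod fun p _ => le_add_of_nonneg_right (singularExcess_nonneg h p)).trans_eq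
    (singularFactor_eq h).symm

lemma prod_one_add_singularExcess_le (h0 : h ≠ 0) (P : ℕ) :
    ∏ p ∈ P.primeFactors, (1 + singularExcess h p) ≤ singularFactor h := by
  have hone : ∀ p, 1 ≤ 1 + singularExcess h p := fun p =>
    le_add_of_nonneg_right (singularExcess_nonneg h p)
  have hvanish : ∀ p ∈ P.primeFactors, ¬p ∣ h → 1 + singularExcess h p = 1 := fun p _ hp => by
    simp [singularExcess, hp]
  rw [singularFactor_eq, ← prod_filter_of_ne fun p hp hne => not_imp_comm.1 (hvanish p hp) hne]
  refine prod_le_prod_of_subset_of_one_le (fun p hp => ?_) (fun p _ => one_pos.le.trans (hone p))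
    fun p _ _ => hone p
  obtain ⟨hp, hph⟩ := mem_filter.1 hp
  exact Nat.mem_primeFactors.2 ⟨Nat.prime_of_mem_primeFactors hp, hph, h0⟩

lemma selbergTerms_pairSieve (hh : 2 ∣ h) (N : ℕ) (hp : p.Prime) :
    (pairSieve hh N z).selbergTerms p = if p ∣ h then 1 / ((p : ℝ) - 1) else 2 / (p - 2) := by
  have hnu : (pairSieve hh N z).nu p = rootCount (pairPolynomial h) p / p := rfl
  have hp2 : (2 : ℝ) ≤ p := by exact_mod_cast hp.two_le
  rw [BoundingSieve.selbergTerms_apply, hp.primeFactors, prod_singleton, hnu,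
    rootCount_pairPolynomial hp]
  split_ifs with hph
  · have : (p : ℝ) - 1 ≠ 0 := by linarith
    rw [Nat.cast_one]
    field_simp
  · have : (3 : ℝ) ≤ p := by exact_mod_cast three_le_of_not_dvd hh hp hph
    have : (p : ℝ) - 2 ≠ 0 := by linarith
    rw [Nat.cast_ofNat]
    field_simp

lemma one_add_divisorMajorant_prime (hh : 2 ∣ h) (N : ℕ) (hp : p.Prime) :
    1 + divisorMajorant p = (if p = 2 then 2 else 1) * twinFactor p *
      ((1 + singularExcess h p) * (1 + (pairSieve hh N z).selbergTerms p)) := by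
  rw [divisorMajorant_prime hp, selbergTerms_pairSieve hh N hp, singularExcess, twinFactor]
  rcases eq_or_ne p 2 with rfl | hp2
  · norm_num [hh]
  · have hlt : 2 < p := hp.two_le.lt_of_ne hp2.symm
    have : (2 : ℝ) < p := by exact_mod_cast hlt
    have : (p : ℝ) ≠ 0 := by linarith
    have : (p : ℝ) - 1 ≠ 0 := by linarith
    have : (p : ℝ) - 2 ≠ 0 := by linarith
    by_cases hph : p ∣ h <;> simp only [hp2, hlt, hph, if_true, if_false, and_true] <;> field_simp
      <;> ring

lemma one_add_divisorMajorant_prime_le (hh : 2 ∣ h) (N : ℕ) (hp : p.Prime) (hp2 : p ≠ 2) :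
    1 + divisorMajorant p ≤
      (1 + singularExcess h p) * (1 + (pairSieve hh N z).selbergTerms p) := by
  have hg : 0 ≤ (pairSieve hh N z).selbergTerms p := by
    rw [selbergTerms_pairSieve hh N hp]
    have : (2 : ℝ) ≤ p := by exact_mod_cast hp.two_le
    split_ifs
    exacts [one_div_nonneg.2 (by linarith), div_nonneg zero_le_two (by linarith)]
  have hc := singularExcess_nonneg h p
  rw [one_add_divisorMajorant_prime hh N hp, if_neg hp2, one_mul]
  exact mul_le_of_le_one_left (by positivity) (twinFactor_le_one p)

lemma sum_divisors_divisorMajorant (hh : 2 ∣ h) (N : ℕ) {w : ℕ} (hw : Squarefree w)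
    (hw2 : 2 ∣ w) :
    ∑ d ∈ w.divisors, divisorMajorant d =
      2 * (∏ p ∈ w.primeFactors, twinFactor p) * (∏ p ∈ w.primeFactors, (1 + singularExcess h p)) *
        ∑ d ∈ w.divisors, (pairSieve hh N z).selbergTerms d := by
  have h2 : ∏ p ∈ w.primeFactors, (if p = 2 then (2 : ℝ) else 1) = 2 := by
    rw [prod_ite_eq', if_pos (Nat.mem_primeFactors.2 ⟨Nat.prime_two, hw2, hw.ne_zero⟩)]
  rw [← isMultiplicative_divisorMajorant.prodPrimeFactors_one_add_of_squarefree hw,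
    ← BoundingSieve.selbergTerms_isMultiplicative.prodPrimeFactors_one_add_of_squarefree hw]
  nth_rw 1 [← h2]
  simp only [← prod_mul_distrib]
  refine prod_congr rfl fun p hp => ?_
  rw [one_add_divisorMajorant_prime (z := z) hh N (Nat.prime_of_mem_primeFactors hp), ← mul_assoc]

lemma truncatedDivisorSum_divisorMajorant_div_le (hh : 2 ∣ h) (h0 : h ≠ 0) (N : ℕ) {w : ℕ}
    (hw2 : 2 ∣ w) (hw : w ∣ primorial ⌊z⌋₊) (hz : 0 ≤ z) :
    truncatedDivisorSum divisorMajorant (primorial ⌊z⌋₊) (z / w) ≤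
      2 * (∏ p ∈ w.primeFactors, twinFactor p) *
        (singularFactor h * selbergDenominator (pairSieve hh N z) z) := by
  set s := pairSieve hh N z
  have hg : ∀ d ∈ (primorial ⌊z⌋₊).divisors, 0 ≤ s.selbergTerms d :=
    selbergTerms_nonneg_of_mem_divisors dvd_rfl
  have hdenom : selbergDenominator s z =
    truncatedDivisorSum s.selbergTerms (primorial ⌊z⌋₊) z := rfl
  have hG : 0 ≤ selbergDenominator s z := truncatedDivisorSum_nonneg hg
  have hS : 0 < ∑ d ∈ w.divisors, s.selbergTerms d :=
    sum_pos (fun d hd => BoundingSieve.selbergTerms_pos ((Nat.dvd_of_mem_divisors hd).trans hw))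
      ⟨1, Nat.one_mem_divisors.2 (ne_zero_of_dvd_ne_zero (primorial_pos _).ne' hw)⟩
  have hP : Squarefree (primorial ⌊z⌋₊) := squarefree_primorial _
  have hT : 0 ≤ ∏ p ∈ w.primeFactors, twinFactor p := prod_nonneg fun p _ => (twinFactor_pos p).le
  have hC := prod_one_add_singularExcess_le h0 (primorial ⌊z⌋₊)
  rw [hdenom] at hG ⊢
  obtain ⟨b, hb⟩ := hw
  rw [hb] at hP hg hC hG ⊢
  obtain ⟨hcop, hsqw, -⟩ := Nat.squarefree_mul_iff.1 hP
  have hb2 : ∀ p ∈ b.primeFactors, p ≠ 2 := by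
    rintro p hp rfl
    exact Nat.Prime.not_coprime_iff_dvd.2 ⟨2, Nat.prime_two, hw2, Nat.dvd_of_mem_primeFactors hp⟩
      hcop
  have hcompare := truncatedDivisorSum_div_mul_le isMultiplicative_divisorMajorant
    BoundingSieve.selbergTerms_isMultiplicative hP (fun d _ => divisorMajorant_nonneg d) hg
    (singularExcess_nonneg h) (fun p hp => one_add_divisorMajorant_prime_le hh N
      (Nat.prime_of_mem_primeFactors hp) (hb2 p hp)) hz
  rw [sum_divisors_divisorMajorant hh N hsqw hw2] at hcompare
  rw [hcop.primeFactors_mul, prod_union hcop.disjoint_primeFactors] at hC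
  refine le_of_mul_le_mul_right (hcompare.trans ?_) hS
  calc _ = 2 * (∏ p ∈ w.primeFactors, twinFactor p) *
        (((∏ p ∈ w.primeFactors, (1 + singularExcess h p)) *
          ∏ p ∈ b.primeFactors, (1 + singularExcess h p)) *
            truncatedDivisorSum s.selbergTerms (w * b) z) * ∑ d ∈ w.divisors, s.selbergTerms d := by
        ring
    _ ≤ _ := by gcongr

lemma sq_posLog_div_le (hh : 2 ∣ h) (h0 : h ≠ 0) (N : ℕ) {w : ℕ} (hw : Squarefree w)
    (hw2 : 2 ∣ w) (hwz : w ≤ z) :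
    log⁺ (z / w) ^ 2 ≤ 4 * (∏ p ∈ w.primeFactors, twinFactor p) *
      (singularFactor h * selbergDenominator (pairSieve hh N z) z) := by
  have hw1 : (1 : ℝ) ≤ w := by exact_mod_cast hw.ne_zero.bot_lt
  have hz : 0 ≤ z := by linarith
  have hlog := sq_posLog_div_two_le_truncatedDivisorSum (squarefree_primorial ⌊z⌋₊)
    (primorial_dvd_primorial (Nat.floor_le_floor (div_le_self hz hw1))) (by positivity)
  have hsum := truncatedDivisorSum_divisorMajorant_div_le hh h0 N hw2
    (hw.dvd_primorial.trans (primorial_dvd_primorial (Nat.le_floor hwz))) hz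
  linarith

lemma eventually_log_le_mul_posLog_div {r : ℝ} (hr : 1 < r) {w : ℝ} (hw : 0 < w) :
    ∀ᶠ z : ℝ in Filter.atTop, log z ≤ r * log⁺ (z / w) := by
  filter_upwards [Filter.eventually_gt_atTop 0,
    tendsto_log_atTop.eventually_ge_atTop (r * log w / (r - 1))] with z hz hlog
  have hr0 : 0 < r - 1 := by linarith
  rw [div_le_iff₀ hr0] at hlog
  have hle : log (z / w) ≤ log⁺ (z / w) := le_max_right _ _
  rw [log_div hz.ne' hw.ne'] at hle
  nlinarith

lemma exists_sq_log_le {r : ℝ} (hr : 1 < r) :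
    ∃ z₀ : ℝ, ∀ z ≥ z₀, ∀ {h : ℕ} (hh : 2 ∣ h), h ≠ 0 → ∀ N : ℕ, log z ^ 2 ≤
      r ^ 3 * (4 * twinConst * (singularFactor h * selbergDenominator (pairSieve hh N z) z)) := by
  obtain ⟨w, hw, hw2, hprod⟩ := exists_prod_twinFactor_le hr
  obtain ⟨z₀, hz₀⟩ := Filter.eventually_atTop.1 <|
    (eventually_log_le_mul_posLog_div hr (Nat.cast_pos.2 hw.ne_zero.bot_lt)).and
      ((Filter.eventually_ge_atTop (w : ℝ)).and (Filter.eventually_ge_atTop 1))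
  refine ⟨z₀, fun z hz h hh h0 N => ?_⟩
  obtain ⟨hlog, hwz, hz1⟩ := hz₀ z hz
  set G := singularFactor h * selbergDenominator (pairSieve hh N z) z
  have hG : 0 ≤ G := mul_nonneg (zero_le_one.trans (one_le_singularFactor h))
    (selbergDenominator_pos hz1).le
  have : 0 ≤ r := by linarith
  calc log z ^ 2 ≤ (r * log⁺ (z / w)) ^ 2 := pow_le_pow_left₀ (log_nonneg hz1) hlog 2
    _ = r ^ 2 * log⁺ (z / w) ^ 2 := by ring
    _ ≤ r ^ 2 * (4 * (r * twinConst) * G) := by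
        gcongr
        exact (sq_posLog_div_le hh h0 N hw hw2 hwz).trans (by gcongr)
    _ = r ^ 3 * (4 * twinConst * G) := by ring

end SingularSeries

section PrimePairs

variable {r y : ℝ}

lemma eventually_sq_mul_log_add_le {a C : ℝ} (ha0 : 0 ≤ a) (ha : 2 * a < 1) (hC : 0 < C) :
    ∀ᶠ y : ℝ in Filter.atTop, (y ^ a * (1 + log (y ^ a))) ^ 2 + y ^ a ≤ C * (y / log y ^ 2) := by
  filter_upwards
    [(isLittleO_log_rpow_rpow_atTop 4 (sub_pos.2 ha)).bound (by positivity : 0 < C / 5),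
    tendsto_log_atTop.eventually_ge_atTop 1, Filter.eventually_ge_atTop 1] with y hlittle hlog hy
  have hy0 : 0 < y := by linarith
  have hz : 1 ≤ y ^ a := one_le_rpow hy ha0
  have hpow : y ^ (1 - 2 * a) * (y ^ a) ^ 2 = y := by
    rw [← rpow_mul_natCast hy0.le, ← rpow_add hy0]
    norm_num [mul_comm a]
  rw [norm_of_nonneg (by positivity), norm_of_nonneg (by positivity),
    show (4 : ℝ) = (4 : ℕ) by norm_num, rpow_natCast] at hlittle
  rw [log_rpow hy0, ← mul_div_assoc, le_div_iff₀ (by positivity)]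
  have hfactor : 1 + a * log y ≤ 2 * log y := by nlinarith
  have hsq : 1 ≤ log y ^ 2 := one_le_pow₀ hlog
  have hz2 : y ^ a ≤ (y ^ a) ^ 2 := le_self_pow₀ hz two_ne_zero
  calc ((y ^ a * (1 + a * log y)) ^ 2 + y ^ a) * log y ^ 2
      ≤ ((y ^ a * (2 * log y)) ^ 2 + (y ^ a) ^ 2 * log y ^ 2) * log y ^ 2 := by
        gcongr
        exact hz2.trans (le_mul_of_one_le_right (by positivity) hsq)
    _ = 5 * (log y ^ 4 * (y ^ a) ^ 2) := by ring
    _ ≤ 5 * (C / 5 * y ^ (1 - 2 * a) * (y ^ a) ^ 2) := by gcongr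
    _ = C * (y ^ (1 - 2 * a) * (y ^ a) ^ 2) := by ring
    _ = C * y := by rw [hpow]

lemma div_le_of_sq_log_rpow_le {N G F : ℝ} (hr : 0 < r) (hy : 1 < y) (hN : N ≤ y) (hG : 0 < G)
    (hlog : log (y ^ (2 * r)⁻¹) ^ 2 ≤ r ^ 3 * (4 * F * G)) :
    N / G ≤ r ^ 5 * (16 * (F * (y / log y ^ 2))) := by
  have hl : 0 < log y := log_pos hy
  rw [log_rpow (by linarith)] at hlog
  rw [div_le_iff₀ hG]
  calc N ≤ (2 * r) ^ 2 * ((2 * r)⁻¹ * log y) ^ 2 * (y / log y ^ 2) := by field_simp; exact hN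
    _ ≤ (2 * r) ^ 2 * (r ^ 3 * (4 * F * G)) * (y / log y ^ 2) := by gcongr
    _ = r ^ 5 * (16 * (F * (y / log y ^ 2))) * G := by ring

lemma exists_one_lt_pow_five_add_le {ε : ℝ} (hε : 0 < ε) : ∃ r > 1, r ^ 5 + (r - 1) ≤ 1 + ε := by
  have hlim : Filter.Tendsto (fun r : ℝ => r ^ 5 + (r - 1)) (nhdsWithin 1 (Set.Ioi 1)) (nhds 1) :=
    (Continuous.tendsto' (by fun_prop) 1 1 (by norm_num)).mono_left nhdsWithin_le_nhds
  obtain ⟨r, hle, hr⟩ :=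
    ((hlim.eventually_le_const (lt_add_of_pos_right 1 hε)).and self_mem_nhdsWithin).exists
  exact ⟨r, hr, hle⟩

theorem exists_card_prime_pairs_le {ε : ℝ} (hε : 0 < ε) :
    ∃ y₀ : ℝ, ∀ y ≥ y₀, ∀ {h : ℕ}, 2 ∣ h → h ≠ 0 →
      (#{q ∈ Ioc 0 ⌊y⌋₊ | q.Prime ∧ (h * q + 1).Prime} : ℝ) ≤
        (1 + ε) * 16 * twinConst * (singularFactor h * (y / log y ^ 2)) := by
  obtain ⟨r, hr, hrε⟩ := exists_one_lt_pow_five_add_le hε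
  obtain ⟨z₀, hz₀⟩ := exists_sq_log_le hr
  have hr0 : 0 < r := by linarith
  have : 0 ≤ r - 1 := by linarith
  have ha0 : 0 < (2 * r)⁻¹ := by positivity
  have ha : 2 * (2 * r)⁻¹ < 1 := by field_simp; exact hr
  have hT := twinConst_pos
  obtain ⟨y₀, hy₀⟩ := Filter.eventually_atTop.1 <|
    ((tendsto_rpow_atTop ha0).eventually_ge_atTop z₀).and <|
      (eventually_sq_mul_log_add_le ha0.le ha
        (by positivity : 0 < (r - 1) * 16 * twinConst)).and (Filter.eventually_gt_atTop 1)
  refine ⟨y₀, fun y hy h hh h0 => ?_⟩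
  obtain ⟨hz, herror, hy1⟩ := hy₀ y hy
  have hz1 : 1 ≤ y ^ (2 * r)⁻¹ := one_le_rpow hy1.le ha0.le
  have hsieve := card_prime_pairs_le hh h0 ⌊y⌋₊ hz1
  have hmain := div_le_of_sq_log_rpow_le (F := twinConst * singularFactor h) hr0 hy1
    (Nat.floor_le (by linarith)) (selbergDenominator_pos hz1)
    ((hz₀ _ hz hh h0 ⌊y⌋₊).trans_eq (by ring))
  have hF := one_le_singularFactor h
  set X := y / log y ^ 2
  have hX : 0 ≤ X := by positivity
  calc _ ≤ r ^ 5 * (16 * (twinConst * singularFactor h * X)) + (r - 1) * 16 * twinConst * X := by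
        linarith
    _ ≤ r ^ 5 * (16 * (twinConst * singularFactor h * X)) +
          (r - 1) * 16 * twinConst * (singularFactor h * X) := by
        gcongr
        exact le_mul_of_one_le_left hX hF
    _ = (r ^ 5 + (r - 1)) * (16 * twinConst * (singularFactor h * X)) := by ring
    _ ≤ (1 + ε) * (16 * twinConst * (singularFactor h * X)) := by gcongr
    _ = (1 + ε) * 16 * twinConst * (singularFactor h * X) := by ring

end PrimePairs

section LargestPrimeFactor

variable {p : ℕ} {c x : ℝ}

lemma Pplus_mem_primeFactors {n : ℕ} (hP : 2 ≤ Pplus n) : Pplus n ∈ n.primeFactors := by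
  have hn : 1 < n := by
    by_contra! hle
    interval_cases n <;> simp [Pplus] at hP
  obtain ⟨p, hp, hsup⟩ := exists_mem_eq_sup _ (Nat.nonempty_primeFactors.2 hn) id
  rwa [Pplus, if_neg hn.ne', hsup]

lemma exists_mul_Pplus_add_one_eq (hp : p.Prime) (hP : 3 ≤ Pplus (p - 1)) :
    ∃ h ≠ 0, 2 ∣ h ∧ h * Pplus (p - 1) + 1 = p := by
  obtain ⟨hq, ⟨h, hh⟩, hp1⟩ :=
    Nat.mem_primeFactors.1 (Pplus_mem_primeFactors (by omega : 2 ≤ Pplus (p - 1)))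
  have hp2 : p ≠ 2 := by
    rintro rfl
    simp [Pplus] at hP
  have heven : 2 ∣ Pplus (p - 1) * h := hh ▸ (hp.even_sub_one hp2).two_dvd
  refine ⟨h, ?_, ?_, ?_⟩
  · rintro rfl
    omega
  · refine (Nat.prime_two.dvd_mul.1 heven).resolve_left fun h2 => ?_
    have := (Nat.prime_dvd_prime_iff_eq Nat.prime_two hq).1 h2
    omega
  · rw [mul_comm, ← hh]
    omega

/-- The range `{h : 2 ∣ h, 0 < h < X}` of summation of the sieve bound, for `X = x ^ (1 - c)`. -/
noncomputable def evenBelow (X : ℝ) : Finset ℕ :=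
  (range (⌈X⌉₊ + 1)).filter fun h : ℕ => 2 ∣ h ∧ 0 < h ∧ (h : ℝ) < X

lemma mem_evenBelow {X : ℝ} {h : ℕ} : h ∈ evenBelow X ↔ 2 ∣ h ∧ 0 < h ∧ (h : ℝ) < X := by
  rw [evenBelow, mem_filter, and_iff_right_iff_imp, mem_range, Nat.lt_succ_iff]
  exact fun hh => Nat.cast_le.1 (hh.2.2.le.trans (Nat.le_ceil X))

lemma rpow_one_sub_mul_rpow (hx : 0 < x) : x ^ (1 - c) * x ^ c = x := by
  rw [← rpow_add hx, sub_add_cancel, rpow_one]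

lemma exists_prime_pair_of_rpow_le_Pplus (hx : 0 < x) (hc : 3 ≤ x ^ c) (hp : p.Prime)
    (hpx : p ≤ x) (hP : x ^ c ≤ Pplus (p - 1)) :
    ∃ h ∈ evenBelow (x ^ (1 - c)), ∃ q ∈ Ioc 0 ⌊x / h⌋₊,
      q.Prime ∧ (h * q + 1).Prime ∧ h * q + 1 = p := by
  have hP3 : 3 ≤ Pplus (p - 1) := by exact_mod_cast hc.trans hP
  obtain ⟨h, h0, hh, heq⟩ := exists_mul_Pplus_add_one_eq hp hP3
  have hq := Nat.prime_of_mem_primeFactors <|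
    Pplus_mem_primeFactors (by omega : 2 ≤ Pplus (p - 1))
  have hh0 : (0 : ℝ) < h := by exact_mod_cast h0.bot_lt
  have hcast : (h : ℝ) * Pplus (p - 1) + 1 = p := by exact_mod_cast heq
  have hlt : (h : ℝ) * x ^ c < x ^ (1 - c) * x ^ c := by
    rw [rpow_one_sub_mul_rpow hx]
    nlinarith
  refine ⟨h, mem_evenBelow.2 ⟨hh, h0.bot_lt, lt_of_mul_lt_mul_right hlt (by positivity)⟩,
    Pplus (p - 1), mem_Ioc.2 ⟨hq.pos, Nat.le_floor ?_⟩, hq, heq.symm ▸ hp, heq⟩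
  rw [le_div_iff₀ hh0]
  linarith

lemma T'_le_sum_card_prime_pairs (hx : 0 < x) (hc : 3 ≤ x ^ c) :
    T' c x ≤ ∑ h ∈ evenBelow (x ^ (1 - c)),
      #{q ∈ Ioc 0 ⌊x / h⌋₊ | q.Prime ∧ (h * q + 1).Prime} := by
  have hsub : {p ∈ range (⌊x⌋₊ + 1) | p.Prime ∧ x ^ c ≤ Pplus (p - 1)} ⊆
      (evenBelow (x ^ (1 - c))).biUnion fun h =>
        {q ∈ Ioc 0 ⌊x / h⌋₊ | q.Prime ∧ (h * q + 1).Prime}.image (h * · + 1) := fun p hp => by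
    obtain ⟨hpx, hp, hP⟩ := mem_filter.1 hp
    have hpx : (p : ℝ) ≤ x := (Nat.le_floor_iff hx.le).1 (Nat.lt_succ_iff.1 (mem_range.1 hpx))
    obtain ⟨h, hh, q, hqx, hq, hq', heq⟩ := exists_prime_pair_of_rpow_le_Pplus hx hc hp hpx hP
    exact mem_biUnion.2 ⟨h, hh, mem_image.2 ⟨q, mem_filter.2 ⟨hqx, hq, hq'⟩, heq⟩⟩
  exact (card_le_card hsub).trans <| card_biUnion_le.trans <| sum_le_sum fun h _ => card_image_le

lemma rpow_le_div_of_mem_evenBelow (hx : 0 < x) {h : ℕ} (hh : h ∈ evenBelow (x ^ (1 - c))) :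
    x ^ c ≤ x / h := by
  obtain ⟨-, h0, hlt⟩ := mem_evenBelow.1 hh
  rw [le_div_iff₀' (by exact_mod_cast h0)]
  calc h * x ^ c ≤ x ^ (1 - c) * x ^ c := by gcongr
    _ = x := rpow_one_sub_mul_rpow hx

end LargestPrimeFactor

theorem T'_le_sieve_sum_general {c : ℝ} (hc : 0 < c) :
    ∀ ε > (0 : ℝ), ∃ x₀ : ℝ, ∀ x ≥ x₀, (T' c x : ℝ) ≤ (1 + ε) * 16 * twinConst *
      ∑ h ∈ evenBelow (x ^ (1 - c)), singularFactor h * ((x / h) / log (x / h) ^ 2) := by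
  intro ε hε
  obtain ⟨y₀, hy₀⟩ := exists_card_prime_pairs_le hε
  obtain ⟨x₀, hx₀⟩ := Filter.eventually_atTop.1 <|
    ((tendsto_rpow_atTop hc).eventually_ge_atTop (max 3 y₀)).and (Filter.eventually_gt_atTop 0)
  refine ⟨x₀, fun x hx => ?_⟩
  obtain ⟨hxc, hx0⟩ := hx₀ x hx
  calc (T' c x : ℝ) ≤ ∑ h ∈ evenBelow (x ^ (1 - c)),
        (#{q ∈ Ioc 0 ⌊x / h⌋₊ | q.Prime ∧ (h * q + 1).Prime} : ℝ) := by
        exact_mod_cast T'_le_sum_card_prime_pairs hx0 ((le_max_left _ _).trans hxc)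
    _ ≤ ∑ h ∈ evenBelow (x ^ (1 - c)),
        (1 + ε) * 16 * twinConst * (singularFactor h * ((x / h) / log (x / h) ^ 2)) :=
        sum_le_sum fun h hh => hy₀ (x / h)
          (((le_max_right _ _).trans hxc).trans (rpow_le_div_of_mem_evenBelow hx0 hh))
          (mem_evenBelow.1 hh).1 (mem_evenBelow.1 hh).2.1.ne'
    _ = _ := (mul_sum _ _ _).symm

end

/-- For fixed `1/2 ≤ c < 1`,
`T'_c(x) ≤ (1+o(1))·16·𝔖·Σ_{h < x^{1−c}, h even} ∏_{p∣h, p>2}(1+1/(p−2))·(x/h)/(log(x/h))²`. -/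
theorem T'_le_sieve_sum (c : ℝ) (hc1 : 1 / 2 ≤ c) (hc2 : c < 1) :
    ∀ ε > (0 : ℝ), ∃ x₀ : ℝ, ∀ x ≥ x₀,
      (T' c x : ℝ) ≤ (1 + ε) * 16 * twinConst *
        ∑ h ∈ (Finset.range (⌈x ^ (1 - c)⌉₊ + 1)).filter
            (fun h : ℕ => 2 ∣ h ∧ 0 < h ∧ (h : ℝ) < x ^ (1 - c)),
          (∏ p ∈ h.primeFactors.filter (fun p => 2 < p), (1 + 1 / ((p : ℝ) - 2))) *
            ((x / h) / (Real.log (x / h)) ^ 2) :=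
  T'_le_sieve_sum_general (by linarith)
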